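/- arXiv:0909.0244 — 6 statements merged into one kernel-verified Lean document; each statement's English description precedes it below -/
import Mathlib

section
/- Let l ∈ R_1 and y ∈ R_1 be strong Lefschetz elements for the finite length graded R-modules M and N respectively. If the Hilbert functions of M and N are both symmetric (h_d = h_{p−d} for all d, where p is the respective socle degree), then M ⊗_k N has the strong Lefschetz property and its Hilbert function is symmetric. -/
open MvPolynomial TensorProduct

/-- `gr` is a grading making `M` a graded module over the standard graded polynomial ring
`k[x_1, …, x_n]`: `M` is the internal direct sum of the subspaces `gr i`, and homogeneous
polynomials of degree `i` map `gr j` into `gr (i + j)`. -/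
def IsGrading (k : Type*) [Field k] (n : ℕ) {M : Type*} [AddCommGroup M] [Module k M]
    [Module (MvPolynomial (Fin n) k) M] (gr : ℕ → Submodule k M) : Prop :=
  DirectSum.IsInternal gr ∧
    ∀ (i j : ℕ) (r : MvPolynomial (Fin n) k), r ∈ homogeneousSubmodule (Fin n) k i →
      ∀ x ∈ gr j, r • x ∈ gr (i + j)

/-- The scalar `z` satisfies the strong Lefschetz condition for the grading `gr`:
for all nonnegative `a` and `d`, multiplication by `z ^ a` maps `gr d` to `gr (d + a)`
injectively or surjectively. -/
def IsSLAction {k A T : Type*} [Field k] [CommRing A] [AddCommGroup T] [Module k T]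
    [Module A T] (gr : ℕ → Submodule k T) (z : A) : Prop :=
  ∀ a d : ℕ, (∀ x ∈ gr d, z ^ a • x = 0 → x = 0) ∨
    (∀ w ∈ gr (d + a), ∃ x ∈ gr d, z ^ a • x = w)

/-- The data `(iv α, dv α, e α)` exhibits a degree-zero decomposition
`T ≅ ⊕_α k[z](-(iv α))/(z^(dv α))` of the graded module `T` as a graded `k[z]`-module:
each `e α` is homogeneous of degree `iv α`, is killed by `z ^ dv α`, the elements
`z ^ j • e α` (`j < dv α`) are homogeneous of degree `iv α + j` and form a `k`-basis of `T`. -/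
def IsDecomp {k A T : Type*} [Field k] [CommRing A] [AddCommGroup T] [Module k T]
    [Module A T] (gr : ℕ → Submodule k T) (z : A) {Λ : Type*} (iv dv : Λ → ℕ)
    (e : Λ → T) : Prop :=
  (∀ α, 1 ≤ dv α) ∧ (∀ (α : Λ) (j : ℕ), j < dv α → z ^ j • e α ∈ gr (iv α + j)) ∧
    (∀ α, z ^ dv α • e α = 0) ∧
    LinearIndependent k (fun q : Σ α : Λ, Fin (dv α) => z ^ (q.2 : ℕ) • e q.1) ∧
    Submodule.span k (Set.range (fun q : Σ α : Λ, Fin (dv α) => z ^ (q.2 : ℕ) • e q.1)) = ⊤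

/-- `p` is the socle degree of the graded module with grading `gr`:
the largest degree in which the module is nonzero. -/
def IsSocleDegree {k T : Type*} [Field k] [AddCommGroup T] [Module k T]
    (gr : ℕ → Submodule k T) (p : ℕ) : Prop :=
  gr p ≠ ⊥ ∧ ∀ e : ℕ, p < e → gr e = ⊥

/-- The partial order on the cyclic summands of a decomposition:
`S_β ⪯ S_α` iff `iv α ≤ iv β` and `dv β + iv β ≤ dv α + iv α`. -/
def Prec {Λ : Type*} (iv dv : Λ → ℕ) (β α : Λ) : Prop :=
  iv α ≤ iv β ∧ dv β + iv β ≤ dv α + iv α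

/-- A decomposition with data `(iv, dv)` is almost centered if whenever `S_β ⪯ S_α` one has
`|L_{αβ} - R_{αβ}| ≤ 1`, where `L_{αβ} = iv β - iv α` and
`R_{αβ} = (dv α + iv α) - (dv β + iv β)`. -/
def AlmostCentered {Λ : Type*} (iv dv : Λ → ℕ) : Prop :=
  ∀ α β : Λ, Prec iv dv β α →
    |((iv β : ℤ) - (iv α : ℤ)) - (((dv α : ℤ) + (iv α : ℤ)) - ((dv β : ℤ) + (iv β : ℤ)))| ≤ 1

/-- The strong Lefschetz condition for an endomorphism `f` (the action of a scalar on a module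
realized as an endomorphism): for all nonnegative `a` and `d`, the map `f ^ a` sends `gr d`
to `gr (d + a)` injectively or surjectively. -/
def IsSLEnd {k T : Type*} [Field k] [AddCommGroup T] [Module k T]
    (gr : ℕ → Submodule k T) (f : Module.End k T) : Prop :=
  ∀ a d : ℕ, (∀ x ∈ gr d, (f ^ a) x = 0 → x = 0) ∨
    (∀ w ∈ gr (d + a), ∃ x ∈ gr d, (f ^ a) x = w)

/-- A degree-zero decomposition `T ≅ ⊕_α k[z](-(iv α))/(z^(dv α))` of `T` as a graded
`k[z]`-module, where `z` acts via the endomorphism `f`. -/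
def IsDecompEnd {k T : Type*} [Field k] [AddCommGroup T] [Module k T]
    (gr : ℕ → Submodule k T) (f : Module.End k T) {Λ : Type*} (iv dv : Λ → ℕ)
    (e : Λ → T) : Prop :=
  (∀ α, 1 ≤ dv α) ∧ (∀ (α : Λ) (j : ℕ), j < dv α → (f ^ j) (e α) ∈ gr (iv α + j)) ∧
    (∀ α, (f ^ dv α) (e α) = 0) ∧
    LinearIndependent k (fun q : Σ α : Λ, Fin (dv α) => (f ^ (q.2 : ℕ)) (e q.1)) ∧
    Submodule.span k (Set.range (fun q : Σ α : Λ, Fin (dv α) => (f ^ (q.2 : ℕ)) (e q.1))) = ⊤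

/-- The total-degree grading on `M ⊗_k N`: the degree `e` piece is spanned by the tensors
`x ⊗ y` with `x, y` homogeneous of degrees summing to `e`. -/
def tensorGr {k : Type*} [Field k] {M N : Type*} [AddCommGroup M] [Module k M]
    [AddCommGroup N] [Module k N] (grM : ℕ → Submodule k M) (grN : ℕ → Submodule k N)
    (e : ℕ) : Submodule k (M ⊗[k] N) :=
  Submodule.span k {t | ∃ (d₁ d₂ : ℕ) (x : M) (y : N), d₁ + d₂ = e ∧ x ∈ grM d₁ ∧
    y ∈ grN d₂ ∧ t = x ⊗ₜ[k] y}

/-- The action of the ring `R ⊗_k R` on `M ⊗_k N`, where the first factor acts on `M` and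
the second on `N`, realized as a `k`-algebra homomorphism into the endomorphisms. -/
noncomputable def tensorAct (k : Type*) [Field k] {n : ℕ} (M N : Type*) [AddCommGroup M]
    [Module k M] [Module (MvPolynomial (Fin n) k) M]
    [IsScalarTower k (MvPolynomial (Fin n) k) M]
    [AddCommGroup N] [Module k N] [Module (MvPolynomial (Fin n) k) N]
    [IsScalarTower k (MvPolynomial (Fin n) k) N] :
    (MvPolynomial (Fin n) k) ⊗[k] (MvPolynomial (Fin n) k) →ₐ[k]
      Module.End k (M ⊗[k] N) :=
  (Module.endTensorEndAlgHom (R := k) (S := k) (A := k)).comp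
    (Algebra.TensorProduct.map (Algebra.lsmul k k M (A := MvPolynomial (Fin n) k))
      (Algebra.lsmul k k N (A := MvPolynomial (Fin n) k)))

/-- Linear forms of `R ⊗_k R`: elements `r ⊗ 1 + 1 ⊗ s` with `r, s` linear forms of `R`. -/
def IsLinearForm2 {k : Type*} [Field k] {n : ℕ}
    (w : (MvPolynomial (Fin n) k) ⊗[k] (MvPolynomial (Fin n) k)) : Prop :=
  ∃ r s : MvPolynomial (Fin n) k, r ∈ homogeneousSubmodule (Fin n) k 1 ∧
    s ∈ homogeneousSubmodule (Fin n) k 1 ∧ w = r ⊗ₜ[k] (1 : MvPolynomial (Fin n) k) +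
      (1 : MvPolynomial (Fin n) k) ⊗ₜ[k] s


section
variable {k T : Type} [Field k] [AddCommGroup T] [Module k T]

theorem claimA [CharZero k] (W : ℤ → Submodule k T) (E F : Module.End k T) (c : ℤ)
    (hF : ∀ e, ∀ x ∈ W e, F x ∈ W (e - 1))
    (hEF : ∀ e, ∀ x ∈ W e, E (F x) = F (E x) + ((2 * e - c : ℤ) : k) • x) (r : ℕ) :
    ∀ (e j : ℤ) (u : T), u ∈ W e → (F ^ r) u = 0 → 0 ≤ j → j < c - 2 * e →
      F (E u) = ((j * (2 * e + j + 1 - c) : ℤ) : k) • u → u = 0 := by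
  induction r with
  | zero => intro e j u _ h _ _ _; simpa using h
  | succ r ih =>
    intro e j u hu h hj hjc hFE
    have h1 : F u = 0 := by
      refine ih (e - 1) (j + 1) (F u) (hF e u hu) ?_ (by omega) (by omega) ?_
      · rw [pow_succ] at h; exact h
      · rw [hEF e u hu, hFE, ← add_smul, map_smul, ← Int.cast_add]
        congr 2; ring
    have h2 := hEF e u hu
    rw [h1, hFE, map_zero, ← add_smul, ← Int.cast_add] at h2
    rcases smul_eq_zero.1 h2.symm with h3 | h3
    · exfalso
      have h4 : j * (2 * e + j + 1 - c) + (2 * e - c) = (j + 1) * (2 * e + j - c) := by ring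
      rw [h4, Int.cast_eq_zero] at h3
      rcases mul_eq_zero.1 h3 with h | h <;> omega
    · exact h3

theorem claimB [CharZero k] (W : ℤ → Submodule k T) (E F : Module.End k T) (c : ℤ)
    (hE : ∀ e, ∀ x ∈ W e, E x ∈ W (e + 1))
    (hF : ∀ e, ∀ x ∈ W e, F x ∈ W (e - 1))
    (hEF : ∀ e, ∀ x ∈ W e, E (F x) = F (E x) + ((2 * e - c : ℤ) : k) • x)
    (hnil : ∀ e, ∀ x ∈ W e, ∃ r : ℕ, (F ^ r) x = 0)
    (e : ℤ) (s : ℕ) : (s : ℤ) ≤ c - 2 * e → ∀ x ∈ W e, (E ^ s) x = 0 → x = 0 := by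
  have hpow : ∀ (s : ℕ), ∀ x ∈ W e, (E ^ s) x ∈ W (e + s) := by
    intro s
    induction s with
    | zero => intro x hx; simpa using hx
    | succ s ih =>
      intro x hx
      rw [pow_succ', Module.End.mul_apply]
      have := hE _ _ (ih x hx)
      rwa [add_assoc] at this
  have hcomm : ∀ (s : ℕ), ∀ x ∈ W e, (E ^ s) (F (E x)) =
      F ((E ^ (s + 1)) x) + ((s * (2 * e + s + 1 - c) : ℤ) : k) • (E ^ s) x := by
    intro s
    induction s with
    | zero => intro x hx; simp
    | succ s ih =>
      intro x hx
      rw [pow_succ', Module.End.mul_apply, ih x hx, map_add, map_smul,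
        hEF _ _ (hpow (s + 1) x hx), pow_succ' E (s + 1), Module.End.mul_apply, add_assoc,
        pow_succ' E s, Module.End.mul_apply, ← add_smul, ← Int.cast_add]
      congr 3
      push_cast
      ring
  induction s with
  | zero => intro _ x _ h; simpa using h
  | succ s ih =>
    intro hs x hx h
    obtain ⟨r, hr⟩ := hnil e x hx
    refine claimA W E F c hF hEF r e s x hx hr (by omega) (by push_cast at hs; omega) ?_
    rw [← sub_eq_zero]
    apply ih (by push_cast at hs; omega)
    · refine Submodule.sub_mem _ ?_ (Submodule.smul_mem _ _ hx)
      have := hF _ _ (hE _ _ hx)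
      rwa [add_sub_cancel_right] at this
    · rw [map_sub, hcomm s x hx, h, map_smul]
      simp

/-- sl2-type package -/
structure Sl2Pack (gr : ℕ → Submodule k T) (p : ℕ) (E F : Module.End k T) : Prop where
  hE : ∀ e, ∀ x ∈ gr e, E x ∈ gr (e + 1)
  hF : ∀ e, ∀ x ∈ gr e, (∃ e', e = e' + 1 ∧ F x ∈ gr e') ∨ F x = 0
  hEF : ∀ e, ∀ x ∈ gr e, E (F x) = F (E x) + ((2 * e - p : ℤ) : k) • x
  top : ∀ e, p < e → gr e = ⊥

theorem slpow_mem (gr : ℕ → Submodule k T) (E : Module.End k T)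
    (hE : ∀ e, ∀ x ∈ gr e, E x ∈ gr (e + 1)) (s : ℕ) : ∀ e, ∀ x ∈ gr e, (E ^ s) x ∈ gr (e + s) := by
  induction s with
  | zero => intro e x hx; simpa using hx
  | succ s ih =>
    intro e x hx
    rw [pow_succ', Module.End.mul_apply]
    exact hE _ _ (ih e x hx)

def zgr (gr : ℕ → Submodule k T) : ℤ → Submodule k T
  | Int.ofNat d => gr d
  | Int.negSucc _ => ⊥

theorem zgr_cast (gr : ℕ → Submodule k T) (d : ℕ) : zgr gr (d : ℤ) = gr d := rfl

theorem mem_zgr (gr : ℕ → Submodule k T) (e : ℤ) (x : T) (hx : x ∈ zgr gr e) :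
    (∃ d : ℕ, e = d ∧ x ∈ gr d) ∨ x = 0 := by
  cases e with
  | ofNat d => exact Or.inl ⟨d, rfl, hx⟩
  | negSucc d => exact Or.inr hx

variable {gr : ℕ → Submodule k T} {p : ℕ} {E F : Module.End k T}

theorem Sl2Pack.zE (h : Sl2Pack gr p E F) (e : ℤ) (x : T) (hx : x ∈ zgr gr e) :
    E x ∈ zgr gr (e + 1) := by
  rcases mem_zgr gr e x hx with ⟨d, rfl, hd⟩ | rfl
  · exact h.hE d x hd
  · simp

theorem Sl2Pack.zF (h : Sl2Pack gr p E F) (e : ℤ) (x : T) (hx : x ∈ zgr gr e) :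
    F x ∈ zgr gr (e - 1) := by
  rcases mem_zgr gr e x hx with ⟨d, rfl, hd⟩ | rfl
  · rcases h.hF d x hd with ⟨d', rfl, h'⟩ | h'
    · have : ((d' + 1 : ℕ) : ℤ) - 1 = (d' : ℤ) := by push_cast; ring
      rw [this]; exact h'
    · simp [h']
  · simp

theorem Sl2Pack.zEF (h : Sl2Pack gr p E F) (e : ℤ) (x : T) (hx : x ∈ zgr gr e) :
    E (F x) = F (E x) + ((2 * e - p : ℤ) : k) • x := by
  rcases mem_zgr gr e x hx with ⟨d, rfl, hd⟩ | rfl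
  · exact h.hEF d x hd
  · simp

theorem Sl2Pack.nilF (h : Sl2Pack gr p E F) (d : ℕ) : ∀ x ∈ gr d, (F ^ (d + 1)) x = 0 := by
  induction d with
  | zero =>
    intro x hx
    rcases h.hF 0 x hx with ⟨d', h0, h'⟩ | h'
    · omega
    · simpa using h'
  | succ d ih =>
    intro x hx
    rw [pow_succ, Module.End.mul_apply]
    rcases h.hF _ x hx with ⟨d', h0, h'⟩ | h'
    · obtain rfl : d = d' := by omega
      exact ih _ h'
    · simp [h']

theorem Sl2Pack.znilF (h : Sl2Pack gr p E F) (e : ℤ) (x : T) (hx : x ∈ zgr gr e) :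
    ∃ r : ℕ, (F ^ r) x = 0 := by
  rcases mem_zgr gr e x hx with ⟨d, rfl, hd⟩ | rfl
  · exact ⟨_, h.nilF d x hd⟩
  · exact ⟨0, by simp⟩

theorem Sl2Pack.znilE (h : Sl2Pack gr p E F) (e : ℤ) (x : T) (hx : x ∈ zgr gr e) :
    ∃ r : ℕ, (E ^ r) x = 0 := by
  rcases mem_zgr gr e x hx with ⟨d, rfl, hd⟩ | rfl
  · refine ⟨p + 1, ?_⟩
    have := slpow_mem gr E h.hE (p + 1) d x hd
    rwa [h.top _ (by omega), Submodule.mem_bot] at this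
  · exact ⟨0, by simp⟩

theorem Sl2Pack.injE [CharZero k] (h : Sl2Pack gr p E F) (d s : ℕ) (hs : 2 * d + s ≤ p) :
    ∀ x ∈ gr d, (E ^ s) x = 0 → x = 0 := by
  intro x hx
  exact claimB (zgr gr) E F p h.zE h.zF h.zEF h.znilF d s (by omega) x hx

theorem Sl2Pack.injF [CharZero k] (h : Sl2Pack gr p E F) (d s : ℕ) (hs : p + s ≤ 2 * d) :
    ∀ x ∈ gr d, (F ^ s) x = 0 → x = 0 := by
  intro x hx
  refine claimB (fun e => zgr gr (-e)) F E (-p) ?_ ?_ ?_ ?_ (-d) s (by omega) x ?_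
  · intro e x hx
    have := h.zF _ x hx
    rwa [show -e - 1 = -(e + 1) by ring] at this
  · intro e x hx
    have := h.zE _ x hx
    rwa [show -e + 1 = -(e - 1) by ring] at this
  · intro e x hx
    rw [h.zEF _ x hx, add_assoc, ← add_smul, ← Int.cast_add]
    ring_nf
    simp
  · intro e x hx
    exact h.znilE _ x hx
  · simpa [zgr_cast] using hx

theorem Sl2Pack.powF (h : Sl2Pack gr p E F) (s : ℕ) : ∀ d, ∀ x ∈ gr (d + s), (F ^ s) x ∈ gr d := by
  induction s with
  | zero => intro e x hx; simpa using hx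
  | succ s ih =>
    intro e x hx
    rw [pow_succ, Module.End.mul_apply]
    rcases h.hF _ x hx with ⟨d', h0, h'⟩ | h'
    · obtain rfl : d' = e + s := by omega
      exact ih _ _ h'
    · simp [h']

theorem Sl2Pack.surjE [CharZero k] [FiniteDimensional k T] (h : Sl2Pack gr p E F) (d s : ℕ)
    (hs : 2 * d + s = p) : ∀ w ∈ gr (d + s), ∃ x ∈ gr d, (E ^ s) x = w := by
  have hmap : ∀ x ∈ gr (d + s), (E ^ s * F ^ s) x ∈ gr (d + s) := fun x hx =>
    slpow_mem gr E h.hE s d _ (h.powF s d x hx)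
  have hinj : Function.Injective ((E ^ s * F ^ s).restrict hmap) := by
    rw [injective_iff_map_eq_zero]
    rintro ⟨x, hx⟩ h0
    have h1 : (E ^ s) ((F ^ s) x) = 0 := congrArg Subtype.val h0
    have h2 := h.injE d s (by omega) _ (h.powF s d x hx) h1
    exact Subtype.ext (h.injF (d + s) s (by omega) x hx h2)
  have hsurj := LinearMap.surjective_of_injective hinj
  intro w hw
  obtain ⟨⟨x, hx⟩, hxw⟩ := hsurj ⟨w, hw⟩
  exact ⟨(F ^ s) x, h.powF s d x hx, congrArg Subtype.val hxw⟩

theorem Sl2Pack.finrank_eq [CharZero k] [FiniteDimensional k T] (h : Sl2Pack gr p E F) (d s : ℕ)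
    (hs : 2 * d + s = p) : Module.finrank k (gr d) = Module.finrank k (gr (d + s)) := by
  have hmap : ∀ x ∈ gr d, (E ^ s) x ∈ gr (d + s) := slpow_mem gr E h.hE s d
  refine (LinearEquiv.ofBijective ((E ^ s).restrict hmap) ⟨?_, ?_⟩).finrank_eq
  · rw [injective_iff_map_eq_zero]
    rintro ⟨x, hx⟩ h0
    exact Subtype.ext (h.injE d s (by omega) x hx (congrArg Subtype.val h0))
  · rintro ⟨w, hw⟩
    obtain ⟨x, hx, hxw⟩ := h.surjE d s hs w hw
    exact ⟨⟨x, hx⟩, Subtype.ext hxw⟩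

theorem Sl2Pack.sl [CharZero k] [FiniteDimensional k T] (h : Sl2Pack gr p E F) (a d : ℕ) :
    (∀ x ∈ gr d, (E ^ a) x = 0 → x = 0) ∨ (∀ w ∈ gr (d + a), ∃ x ∈ gr d, (E ^ a) x = w) := by
  by_cases h1 : 2 * d + a ≤ p
  · exact Or.inl (h.injE d a h1)
  · right
    intro w hw
    by_cases h2 : d + a ≤ p
    · obtain ⟨d', hd'⟩ : ∃ d', d' + (d + a) = p := ⟨p - (d + a), by omega⟩
      obtain ⟨t, rfl⟩ : ∃ t, d = d' + t := ⟨d - d', by omega⟩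
      obtain ⟨x, hx, hxw⟩ := h.surjE d' (a + t) (by omega) w
        (by rwa [add_comm a t, ← add_assoc])
      exact ⟨(E ^ t) x, slpow_mem gr E h.hE t d' x hx, by rw [← hxw, pow_add]; rfl⟩
    · rw [h.top _ (by omega), Submodule.mem_bot] at hw
      exact ⟨0, Submodule.zero_mem _, by simp [hw]⟩

theorem Sl2Pack.symm [CharZero k] [FiniteDimensional k T] (h : Sl2Pack gr p E F) (d : ℕ)
    (hd : d ≤ p) : Module.finrank k (gr d) = Module.finrank k (gr (p - d)) := by
  rcases le_total (2 * d) p with h1 | h1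
  · have := h.finrank_eq d (p - 2 * d) (by omega)
    rwa [show d + (p - 2 * d) = p - d by omega] at this
  · have := h.finrank_eq (p - d) (2 * d - p) (by omega)
    rw [show p - d + (2 * d - p) = d by omega] at this
    exact this.symm

/-- gluing -/
theorem exists_glue (hint : DirectSum.IsInternal gr) (e : ℕ) (g : gr e →ₗ[k] T) :
    ∃ G : Module.End k T, (∀ x : gr e, G x = g x) ∧ ∀ e', e' ≠ e → ∀ x ∈ gr e', G x = 0 := by
  classical
  let eq := LinearEquiv.ofBijective (DirectSum.coeLinearMap gr) hint
  have key : ∀ i (x : gr i), eq.symm x = DirectSum.lof k ℕ (fun i => gr i) i x := by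
    intro i x
    rw [LinearEquiv.symm_apply_eq]
    exact (DirectSum.coeLinearMap_lof gr i x).symm
  refine ⟨g ∘ₗ DirectSum.component k ℕ (fun i => gr i) e ∘ₗ eq.symm.toLinearMap, ?_, ?_⟩
  · intro x
    simp [key]
  · intro e' he x hx
    have := key e' ⟨x, hx⟩
    simp only at this
    simp [this, DirectSum.component.of, he]

theorem exists_G [FiniteDimensional k T] (hint : DirectSum.IsInternal gr)
    (hE : ∀ e, ∀ x ∈ gr e, E x ∈ gr (e + 1)) (d m : ℕ)
    (hsl : (∀ x ∈ gr d, (E ^ m) x = 0 → x = 0) ∨ (∀ w ∈ gr (d + m), ∃ x ∈ gr d, (E ^ m) x = w))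
    (hdim : Module.finrank k (gr d) = Module.finrank k (gr (d + m))) :
    ∃ G : Module.End k T, (∀ x ∈ gr d, G ((E ^ m) x) = x) ∧
      (∀ x ∈ gr (d + m), G x ∈ gr d ∧ (E ^ m) (G x) = x) ∧
      ∀ e', e' ≠ d + m → ∀ x ∈ gr e', G x = 0 := by
  have hmap : ∀ x ∈ gr d, (E ^ m) x ∈ gr (d + m) := slpow_mem gr E hE m d
  let L := (E ^ m).restrict hmap
  have hinj : Function.Injective L := by
    rcases hsl with h | h
    · rw [injective_iff_map_eq_zero]
      rintro ⟨x, hx⟩ h0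
      exact Subtype.ext (h x hx (congrArg Subtype.val h0))
    · rw [LinearMap.injective_iff_surjective_of_finrank_eq_finrank hdim]
      rintro ⟨w, hw⟩
      obtain ⟨x, hx, hxw⟩ := h w hw
      exact ⟨⟨x, hx⟩, Subtype.ext hxw⟩
  have hsurj : Function.Surjective L :=
    (LinearMap.injective_iff_surjective_of_finrank_eq_finrank hdim).1 hinj
  let eq := LinearEquiv.ofBijective L ⟨hinj, hsurj⟩
  obtain ⟨G, hG1, hG2⟩ := exists_glue hint (d + m) ((gr d).subtype ∘ₗ eq.symm.toLinearMap)
  have hG3 : ∀ (x : T) (hx : x ∈ gr (d + m)), G x = eq.symm ⟨x, hx⟩ := fun x hx => hG1 ⟨x, hx⟩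
  refine ⟨G, ?_, ?_, hG2⟩
  · intro x hx
    rw [hG3 _ (hmap x hx)]
    have : eq.symm (L ⟨x, hx⟩) = ⟨x, hx⟩ := eq.symm_apply_apply _
    exact congrArg Subtype.val this
  · intro x hx
    rw [hG3 x hx]
    refine ⟨(eq.symm ⟨x, hx⟩).2, ?_⟩
    exact congrArg Subtype.val (eq.apply_symm_apply ⟨x, hx⟩)

theorem telescope (E G : Module.End k T) (m : ℕ) (x : T) :
    E ((∑ i ∈ Finset.range m, E ^ i * G * E ^ (m - 1 - i)) x) =
      (∑ i ∈ Finset.range m, E ^ i * G * E ^ (m - 1 - i)) (E x) +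
        ((E ^ m) (G x) - G ((E ^ m) x)) := by
  have h : E * (∑ i ∈ Finset.range m, E ^ i * G * E ^ (m - 1 - i)) -
      (∑ i ∈ Finset.range m, E ^ i * G * E ^ (m - 1 - i)) * E = E ^ m * G - G * E ^ m := by
    rw [Finset.mul_sum, Finset.sum_mul, ← Finset.sum_sub_distrib]
    have := Finset.sum_range_sub (fun i => E ^ i * G * E ^ (m - i)) m
    simp only [Nat.sub_self, pow_zero, mul_one, one_mul, Nat.sub_zero] at this
    rw [← this]
    apply Finset.sum_congr rfl
    intro i hi
    rw [Finset.mem_range] at hi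
    rw [show m - (i + 1) = m - 1 - i by omega, show m - i = (m - 1 - i) + 1 by omega,
      pow_succ' E i, pow_succ E (m - 1 - i)]
    simp only [mul_assoc]
  have := congrArg (fun f : Module.End k T => f x) h
  simp only [LinearMap.sub_apply, Module.End.mul_apply] at this
  rw [← this]; abel

theorem exists_pack [FiniteDimensional k T] (hint : DirectSum.IsInternal gr)
    (hE : ∀ e, ∀ x ∈ gr e, E x ∈ gr (e + 1))
    (hsl : ∀ m d, (∀ x ∈ gr d, (E ^ m) x = 0 → x = 0) ∨
      (∀ w ∈ gr (d + m), ∃ x ∈ gr d, (E ^ m) x = w))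
    (htop : ∀ e, p < e → gr e = ⊥)
    (hsym : ∀ d ≤ p, Module.finrank k (gr d) = Module.finrank k (gr (p - d))) :
    ∃ F, Sl2Pack gr p E F := by
  have hex : ∀ d : ℕ, ∃ G : Module.End k T, 2 * d ≤ p →
      ((∀ x ∈ gr d, G ((E ^ (p - 2 * d)) x) = x) ∧
      (∀ x ∈ gr (p - d), G x ∈ gr d ∧ (E ^ (p - 2 * d)) (G x) = x) ∧
      ∀ e', e' ≠ p - d → ∀ x ∈ gr e', G x = 0) := by
    intro d
    by_cases hd : 2 * d ≤ p
    · have hdm : d + (p - 2 * d) = p - d := by omega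
      obtain ⟨G, hG⟩ := exists_G hint hE d (p - 2 * d) (hsl _ _) (by rw [hdm]; exact hsym d (by omega))
      rw [hdm] at hG
      exact ⟨G, fun _ => hG⟩
    · exact ⟨0, fun h => absurd h hd⟩
  choose G hG using hex
  let S := (Finset.range (p + 1)).filter (fun d => 2 * d ≤ p)
  let A : ℕ → Module.End k T := fun d =>
    ∑ i ∈ Finset.range (p - 2 * d), E ^ i * G d * E ^ (p - 2 * d - 1 - i)
  have hS : ∀ d ∈ S, 2 * d ≤ p := fun d hd => (Finset.mem_filter.1 hd).2
  refine ⟨∑ d ∈ S, ((p - 2 * d : ℤ) : k) • A d, hE, ?_, ?_, htop⟩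
  · intro e x hx
    have hterm : ∀ d ∈ S, ∀ i ∈ Finset.range (p - 2 * d),
        (e = d + i + 1 ∧ (E ^ i * G d * E ^ (p - 2 * d - 1 - i)) x ∈ gr (d + i)) ∨
        (E ^ i * G d * E ^ (p - 2 * d - 1 - i)) x = 0 := by
      intro d hd i hi
      have hd' := hS d hd
      rw [Finset.mem_range] at hi
      simp only [Module.End.mul_apply]
      have hm := slpow_mem gr E hE (p - 2 * d - 1 - i) e x hx
      by_cases hc : e + (p - 2 * d - 1 - i) = p - d
      · left
        refine ⟨by omega, slpow_mem gr E hE i d _ ?_⟩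
        rw [hc] at hm
        exact ((hG d hd').2.1 _ hm).1
      · right
        rw [(hG d hd').2.2 _ hc _ hm, map_zero]
    rcases e with _ | e'
    · right
      rw [LinearMap.sum_apply]
      refine Finset.sum_eq_zero fun d hd => ?_
      rw [LinearMap.smul_apply, LinearMap.sum_apply, Finset.sum_eq_zero, smul_zero]
      intro i hi
      rcases hterm d hd i hi with h | h
      · omega
      · exact h
    · left
      refine ⟨e', rfl, ?_⟩
      rw [LinearMap.sum_apply]
      refine Submodule.sum_mem _ fun d hd => ?_
      rw [LinearMap.smul_apply, LinearMap.sum_apply]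
      refine Submodule.smul_mem _ _ (Submodule.sum_mem _ fun i hi => ?_)
      rcases hterm d hd i hi with h | h
      · rw [show e' = d + i by omega]; exact h.2
      · rw [h]; exact Submodule.zero_mem _
  · intro e x hx
    by_cases hep : p < e
    · rw [htop e hep, Submodule.mem_bot] at hx
      simp [hx]
    have h1 : ∀ d ∈ S, E ((((p - 2 * d : ℤ) : k) • A d) x) = (((p - 2 * d : ℤ) : k) • A d) (E x) +
        ((if d = p - e then ((p - 2 * d : ℤ) : k) • x else 0) -
          (if d = e then ((p - 2 * d : ℤ) : k) • x else 0)) := by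
      intro d hd
      have hd' := hS d hd
      rw [LinearMap.smul_apply, LinearMap.smul_apply, map_smul, telescope, smul_add, smul_sub]
      congr 2
      · split_ifs with hc
        · rw [((hG d hd').2.1 x (by rwa [show p - d = e by omega])).2]
        · rw [(hG d hd').2.2 e (by omega) x hx, map_zero, smul_zero]
      · split_ifs with hc
        · subst hc
          rw [(hG d hd').1 x hx]
        · rw [(hG d hd').2.2 _ (by omega) _ (slpow_mem gr E hE (p - 2 * d) e x hx), smul_zero]
    rw [LinearMap.sum_apply, map_sum, Finset.sum_congr rfl h1, Finset.sum_add_distrib,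
      LinearMap.sum_apply, Finset.sum_sub_distrib, Finset.sum_ite_eq', Finset.sum_ite_eq']
    congr 1
    have m1 : (p - e ∈ S) ↔ p ≤ 2 * e := by
      simp only [S, Finset.mem_filter, Finset.mem_range]; omega
    have m2 : (e ∈ S) ↔ 2 * e ≤ p := by
      simp only [S, Finset.mem_filter, Finset.mem_range]; omega
    simp only [m1, m2]
    have hcast : ((p - e : ℕ) : ℤ) = p - e := by omega
    rw [hcast]
    rcases lt_trichotomy p (2 * e) with h | h | h
    · rw [if_pos (by omega), if_neg (by omega), sub_zero]
      congr 2; ring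
    · rw [if_pos (by omega), if_pos (by omega), ← sub_smul, ← Int.cast_sub]
      congr 2; subst h; push_cast; ring
    · rw [if_neg (by omega), if_pos (by omega), zero_sub, ← neg_smul, ← Int.cast_neg]
      congr 2; ring
end

section
variable {k M N : Type} [Field k] [AddCommGroup M] [Module k M] [AddCommGroup N] [Module k N]
variable {grM : ℕ → Submodule k M} {grN : ℕ → Submodule k N} {p q : ℕ}
  {E F : Module.End k M} {E' F' : Module.End k N}

theorem tmul_mem_tensorGr {a b e : ℕ} {x : M} {y : N} (hab : a + b = e) (hx : x ∈ grM a)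
    (hy : y ∈ grN b) : x ⊗ₜ[k] y ∈ tensorGr grM grN e :=
  Submodule.subset_span ⟨a, b, x, y, hab, hx, hy, rfl⟩

theorem tensor_pack (h : Sl2Pack grM p E F) (h' : Sl2Pack grN q E' F') :
    Sl2Pack (tensorGr grM grN) (p + q)
      (TensorProduct.map E LinearMap.id + TensorProduct.map LinearMap.id E')
      (TensorProduct.map F LinearMap.id + TensorProduct.map LinearMap.id F') := by
  refine ⟨?_, ?_, ?_, ?_⟩
  · intro e x hx
    induction hx using Submodule.span_induction with
    | mem x hx =>
      obtain ⟨a, b, x, y, hab, hx, hy, rfl⟩ := hx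
      simp only [LinearMap.add_apply, TensorProduct.map_tmul, LinearMap.id_apply]
      exact Submodule.add_mem _ (tmul_mem_tensorGr (by omega) (h.hE a x hx) hy)
        (tmul_mem_tensorGr (by omega) hx (h'.hE b y hy))
    | zero => simp
    | add x y _ _ hx hy => rw [map_add]; exact Submodule.add_mem _ hx hy
    | smul c x _ hx => rw [map_smul]; exact Submodule.smul_mem _ c hx
  · intro e x hx
    rcases e with _ | e
    · right
      induction hx using Submodule.span_induction with
      | mem x hx =>
        obtain ⟨a, b, x, y, hab, hx, hy, rfl⟩ := hx
        simp only [LinearMap.add_apply, TensorProduct.map_tmul, LinearMap.id_apply]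
        have h1 : F x = 0 := (h.hF a x hx).resolve_left (by rintro ⟨e', he, _⟩; omega)
        have h2 : F' y = 0 := (h'.hF b y hy).resolve_left (by rintro ⟨e', he, _⟩; omega)
        simp [h1, h2]
      | zero => simp
      | add x y _ _ hx hy => rw [map_add, hx, hy, add_zero]
      | smul c x _ hx => rw [map_smul, hx, smul_zero]
    · left
      refine ⟨e, rfl, ?_⟩
      induction hx using Submodule.span_induction with
      | mem x hx =>
        obtain ⟨a, b, x, y, hab, hx, hy, rfl⟩ := hx
        simp only [LinearMap.add_apply, TensorProduct.map_tmul, LinearMap.id_apply]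
        apply Submodule.add_mem
        · rcases h.hF a x hx with ⟨a', ha, hm⟩ | h0
          · exact tmul_mem_tensorGr (by omega) hm hy
          · simp [h0]
        · rcases h'.hF b y hy with ⟨b', hb, hm⟩ | h0
          · exact tmul_mem_tensorGr (by omega) hx hm
          · simp [h0]
      | zero => simp
      | add x y _ _ hx hy => rw [map_add]; exact Submodule.add_mem _ hx hy
      | smul c x _ hx => rw [map_smul]; exact Submodule.smul_mem _ c hx
  · intro e x hx
    induction hx using Submodule.span_induction with
    | mem x hx =>
      obtain ⟨a, b, x, y, rfl, hx, hy, rfl⟩ := hx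
      simp only [LinearMap.add_apply, TensorProduct.map_tmul, LinearMap.id_apply, map_add]
      rw [h.hEF a x hx, h'.hEF b y hy, TensorProduct.add_tmul, TensorProduct.tmul_add,
        TensorProduct.tmul_smul, ← TensorProduct.smul_tmul',
        show ((2 * ((a + b : ℕ) : ℤ) - ((p + q : ℕ) : ℤ) : ℤ) : k) =
          ((2 * (a : ℤ) - p : ℤ) : k) + ((2 * (b : ℤ) - q : ℤ) : k) by push_cast; ring, add_smul]
      abel
    | zero => simp
    | add x y _ _ hx hy => simp only [map_add, smul_add, hx, hy]; abel
    | smul c x _ hx => simp only [map_smul, hx, smul_add, smul_comm c]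
  · intro e he
    rw [eq_bot_iff, tensorGr, Submodule.span_le]
    rintro _ ⟨a, b, x, y, hab, hx, hy, rfl⟩
    by_cases ha : p < a
    · rw [h.top a ha, Submodule.mem_bot] at hx
      simp [hx]
    · rw [h'.top b (by omega), Submodule.mem_bot] at hy
      simp [hy]

theorem tmul_nonzero {x : M} {y : N} (hx : x ≠ 0) (hy : y ≠ 0) : x ⊗ₜ[k] y ≠ 0 := by
  obtain ⟨f, hf⟩ := Module.Projective.exists_dual_ne_zero k hx
  obtain ⟨g, hg⟩ := Module.Projective.exists_dual_ne_zero k hy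
  intro h0
  have := congrArg (TensorProduct.lift ((LinearMap.mul k k).compl₁₂ f g)) h0
  simp at this
  tauto
end

section
variable {k M : Type} [Field k] {n : ℕ} [AddCommGroup M] [Module k M]
  [Module (MvPolynomial (Fin n) k) M] [IsScalarTower k (MvPolynomial (Fin n) k) M]

theorem exists_pack_action [FiniteDimensional k M] (gr : ℕ → Submodule k M)
    (hgr : IsGrading k n gr) (l : MvPolynomial (Fin n) k)
    (hl : l ∈ homogeneousSubmodule (Fin n) k 1) (hSL : IsSLAction gr l) (p : ℕ)
    (hp : IsSocleDegree gr p)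
    (hsym : ∀ d : ℕ, d ≤ p → Module.finrank k (gr d) = Module.finrank k (gr (p - d))) :
    ∃ F, Sl2Pack gr p (Algebra.lsmul k k M l) F := by
  refine exists_pack hgr.1 ?_ ?_ hp.2 hsym
  · intro e x hx
    rw [add_comm]
    exact hgr.2 1 e l hl x hx
  · intro m d
    simp only [← map_pow, Algebra.lsmul_coe]
    exact hSL m d
end

/-- Let `l, y ∈ R_1` be strong Lefschetz elements for the finite length
graded `R`-modules `M` and `N` respectively.  If the Hilbert functions of `M` and `N` are
both symmetric, then `M ⊗_k N` has the strong Lefschetz property (witnessed by a linear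
form of `R ⊗_k R`) and its Hilbert function is symmetric. -/
theorem statement7 {k : Type} [Field k] [CharZero k] {n : ℕ} {M N : Type}
    [AddCommGroup M] [Module k M] [Module (MvPolynomial (Fin n) k) M]
    [IsScalarTower k (MvPolynomial (Fin n) k) M]
    [Module.Finite (MvPolynomial (Fin n) k) M] [FiniteDimensional k M]
    [AddCommGroup N] [Module k N] [Module (MvPolynomial (Fin n) k) N]
    [IsScalarTower k (MvPolynomial (Fin n) k) N]
    [Module.Finite (MvPolynomial (Fin n) k) N] [FiniteDimensional k N]
    (grM : ℕ → Submodule k M) (hgrM : IsGrading k n grM)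
    (grN : ℕ → Submodule k N) (hgrN : IsGrading k n grN)
    (l : MvPolynomial (Fin n) k) (hl : l ∈ homogeneousSubmodule (Fin n) k 1)
    (hSLM : IsSLAction grM l)
    (y : MvPolynomial (Fin n) k) (hy : y ∈ homogeneousSubmodule (Fin n) k 1)
    (hSLN : IsSLAction grN y)
    (pM : ℕ) (hpM : IsSocleDegree grM pM)
    (hsymM : ∀ d : ℕ, d ≤ pM →
      Module.finrank k (grM d) = Module.finrank k (grM (pM - d)))
    (pN : ℕ) (hpN : IsSocleDegree grN pN)
    (hsymN : ∀ d : ℕ, d ≤ pN →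
      Module.finrank k (grN d) = Module.finrank k (grN (pN - d))) :
    (∃ w : (MvPolynomial (Fin n) k) ⊗[k] (MvPolynomial (Fin n) k),
      IsLinearForm2 w ∧ IsSLEnd (tensorGr grM grN) (tensorAct k M N w)) ∧
    (∃ q : ℕ, IsSocleDegree (tensorGr grM grN) q ∧
      ∀ d : ℕ, d ≤ q → Module.finrank k (tensorGr grM grN d) =
        Module.finrank k (tensorGr grM grN (q - d))) := by
  obtain ⟨F, hF⟩ := exists_pack_action grM hgrM l hl hSLM pM hpM hsymM
  obtain ⟨F', hF'⟩ := exists_pack_action grN hgrN y hy hSLN pN hpN hsymN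
  have hT := tensor_pack hF hF'
  refine ⟨⟨l ⊗ₜ[k] 1 + 1 ⊗ₜ[k] y, ⟨l, y, hl, hy, rfl⟩, ?_⟩, pM + pN, ⟨?_, hT.top⟩, hT.symm⟩
  · have hact : tensorAct k M N (l ⊗ₜ[k] 1 + 1 ⊗ₜ[k] y) =
        TensorProduct.map (Algebra.lsmul k k M l) LinearMap.id +
          TensorProduct.map LinearMap.id (Algebra.lsmul k k N y) := by
      apply TensorProduct.ext'
      intro a b
      simp [tensorAct, Module.endTensorEndAlgHom_apply]
    rw [hact]
    exact hT.sl
  · obtain ⟨x, hx, hx0⟩ := Submodule.exists_mem_ne_zero_of_ne_bot hpM.1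
    obtain ⟨z, hz, hz0⟩ := Submodule.exists_mem_ne_zero_of_ne_bot hpN.1
    intro hbot
    have hm : x ⊗ₜ[k] z ∈ tensorGr grM grN (pM + pN) := tmul_mem_tensorGr rfl hx hz
    rw [hbot, Submodule.mem_bot] at hm
    exact tmul_nonzero hx0 hz0 hm
end

section
/- Let k have characteristic zero, R = k[x_1,x_2], and M = R/(x_1^a, x_2^b) with a, b ≥ 1. Then l = x_1 + x_2 is a strong Lefschetz element for M, and as a graded S-module, S = k[l], M decomposes as M ≅ ⊕_{h=0}^{min(a,b)−1} S(−h)/(l^{a+b−1−2h}). -/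
open MvPolynomial TensorProduct

/-- The grading on the quotient `k[x_1, …, x_n]/I` induced by the standard grading:
the degree `e` piece is the image of the homogeneous polynomials of degree `e`. -/
noncomputable def quotGr {k : Type*} [Field k] {σ : Type*} (I : Ideal (MvPolynomial σ k))
    (e : ℕ) : Submodule k (MvPolynomial σ k ⧸ I) :=
  Submodule.map (Ideal.Quotient.mkₐ k I).toLinearMap (homogeneousSubmodule σ k e)


theorem key_poly {k : Type} [Field k] [CharZero k] (c p : ℕ) (hpc : p ≤ c) :
    ∀ (d : ℕ) (F : Polynomial k), (∀ i, d ≤ i → F.coeff i = 0) →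
      (∀ i, p ≤ i → i < p + d → ((1 + Polynomial.X) ^ c * F).coeff i = 0) → F = 0 := by
  intro d
  induction d with
  | zero =>
    intro F hF _
    ext i
    simpa using hF i (Nat.zero_le i)
  | succ d ih =>
    intro F hF hg
    set g := (1 + Polynomial.X) ^ c * F with hgdef
    set Fder := (1 + Polynomial.X) * Polynomial.derivative F - Polynomial.C (d : k) * F with hFder
    have hgF : (1 + Polynomial.X) ^ c * Fder
        = (1 + Polynomial.X) * Polynomial.derivative g - Polynomial.C ((c + d : ℕ) : k) * g := by
      rw [hgdef, hFder]
      rcases c with _ | c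
      · simp
      · simp only [Polynomial.derivative_mul, Polynomial.derivative_pow,
          Polynomial.derivative_one, Polynomial.derivative_X, Nat.cast_add, map_add, map_natCast,
          Nat.add_sub_cancel]
        ring
    have hco : ∀ (G : Polynomial k) (r : k) (i : ℕ),
        ((1 + Polynomial.X) * Polynomial.derivative G - Polynomial.C r * G).coeff i
          = G.coeff (i + 1) * (i + 1) + G.coeff i * (i - r) := by
      intro G r i
      rw [add_mul, one_mul, Polynomial.coeff_sub, Polynomial.coeff_add, Polynomial.coeff_C_mul,
        Polynomial.coeff_derivative]
      rcases i with _ | i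
      · simp; ring
      · rw [Polynomial.coeff_X_mul, Polynomial.coeff_derivative]; push_cast; ring
    have h0 : Fder = 0 := by
      apply ih
      · intro i hi
        rw [hFder, hco, hF (i+1) (by omega)]
        rcases Nat.eq_or_lt_of_le hi with h | h
        · subst h; simp
        · rw [hF i h]; simp
      · intro i h1 h2
        rw [hgF, hco, hg i h1 (by omega), hg (i+1) (by omega) (by omega)]; simp
    have hrec : ∀ i : ℕ, g.coeff (i + 1) * (i + 1) + g.coeff i * (i - ((c + d : ℕ) : k)) = 0 := by
      intro i
      rw [← hco, ← hgF, h0]; simp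
    have hdown : ∀ j, j ≤ p → g.coeff (p - j) = 0 := by
      intro j
      induction j with
      | zero => intro _; exact hg _ (by omega) (by omega)
      | succ j ihj =>
        intro hj
        have h1 := ihj (by omega)
        have h2 := hrec (p - (j + 1))
        rw [show p - (j + 1) + 1 = p - j by omega, h1, zero_mul, zero_add] at h2
        rcases mul_eq_zero.1 h2 with h | h
        · exact h
        · rw [sub_eq_zero] at h
          have := Nat.cast_injective h
          omega
    have hall : ∀ i, g.coeff i = 0 := by
      intro i
      induction i with
      | zero => simpa using hdown p le_rfl
      | succ i ihi =>
        have h2 := hrec i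
        rw [ihi, zero_mul, add_zero] at h2
        rcases mul_eq_zero.1 h2 with h | h
        · exact h
        · exact absurd h (by exact_mod_cast Nat.succ_ne_zero i)
    have hg0 : (1 + Polynomial.X) ^ c * F = 0 := by
      ext i; simpa using hall i
    rcases mul_eq_zero.1 hg0 with h | h
    · exfalso
      have h3 : (1 + Polynomial.X : Polynomial k) = 0 := eq_zero_of_pow_eq_zero h
      have h4 := congrArg (fun q => Polynomial.coeff q 1) h3
      simp [Polynomial.coeff_one] at h4
    · exact h

theorem exists_poly {k : Type} [Field k] (n q h : ℕ) :
    ∃ F : Polynomial k, F ≠ 0 ∧ (∀ i, h + 1 ≤ i → F.coeff i = 0) ∧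
      ∀ i, q ≤ i → i < q + h → ((1 + Polynomial.X) ^ n * F).coeff i = 0 := by
  let φ : Polynomial.degreeLT k (h + 1) →ₗ[k] (Fin h → k) :=
    (LinearMap.pi fun i : Fin h => (Polynomial.lcoeff k (q + i)) ∘ₗ
      (LinearMap.mulLeft k ((1 + Polynomial.X) ^ n : Polynomial k))) ∘ₗ
      (Polynomial.degreeLT k (h + 1)).subtype
  have e := Polynomial.degreeLTEquiv k (h + 1)
  have : FiniteDimensional k (Polynomial.degreeLT k (h + 1)) := Module.Finite.equiv e.symm
  have hk : LinearMap.ker φ ≠ ⊥ := by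
    apply LinearMap.ker_ne_bot_of_finrank_lt
    rw [e.finrank_eq]; simp
  obtain ⟨x, hx, hx0⟩ := Submodule.exists_mem_ne_zero_of_ne_bot hk
  refine ⟨x.1, fun h => hx0 (Subtype.ext h), ?_, ?_⟩
  · intro i hi
    have := Polynomial.mem_degreeLT.1 x.2
    exact Polynomial.coeff_eq_zero_of_degree_lt (this.trans_le (by exact_mod_cast hi))
  · intro i h1 h2
    have := congrFun (LinearMap.mem_ker.1 hx) ⟨i - q, by omega⟩
    simpa [φ, Nat.add_sub_cancel' h1] using this

theorem mem_ideal_iff {k : Type} [Field k] (a b : ℕ) (p : MvPolynomial (Fin 2) k) :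
    p ∈ Ideal.span {(X 0 : MvPolynomial (Fin 2) k) ^ a, (X 1 : MvPolynomial (Fin 2) k) ^ b} ↔
      ∀ m : Fin 2 →₀ ℕ, m 0 < a → m 1 < b → coeff m p = 0 := by
  have : ({(X 0 : MvPolynomial (Fin 2) k) ^ a, (X 1 : MvPolynomial (Fin 2) k) ^ b} :
      Set (MvPolynomial (Fin 2) k)) = (fun s => monomial s (1 : k)) ''
        {Finsupp.single 0 a, Finsupp.single 1 b} := by
    simp [Set.image_pair, X_pow_eq_monomial]
  rw [this, mem_ideal_span_monomial_image]
  apply forall_congr'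
  intro m
  simp only [mem_support_iff, Set.mem_insert_iff, Set.mem_singleton_iff, exists_eq_or_imp,
    exists_eq_left, Finsupp.single_le_iff]
  constructor
  · intro h h1 h2
    by_contra h3
    rcases h h3 with h | h <;> omega
  · intro h h3
    by_contra h4
    push Not at h4
    exact h3 (h h4.1 h4.2)

theorem one_add_X_hom {k : Type} [Field k] (c d : ℕ) (F : Polynomial k)
    (hF : F.natDegree ≤ d) :
    (X 0 + X 1 : MvPolynomial (Fin 2) k) ^ c * F.homogenize d
      = ((1 + Polynomial.X) ^ c * F).homogenize (c + d) := by
  have h1 : (1 + Polynomial.X : Polynomial k).natDegree ≤ 1 := by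
    rw [add_comm]; exact (Polynomial.natDegree_X_add_C (1:k)).le
  have hl : (1 + Polynomial.X : Polynomial k).homogenize 1 = X 0 + X 1 := by
    simp [add_comm]
  have hp : ((1 + Polynomial.X : Polynomial k) ^ c).homogenize c = (X 0 + X 1) ^ c := by
    induction c with
    | zero => simp
    | succ c ih =>
      rw [pow_succ, Polynomial.homogenize_mul _ _ _ h1, ih, hl, pow_succ]
      exact (Polynomial.natDegree_pow_le_of_le c h1).trans (by simp)
  rw [Polynomial.homogenize_mul _ _ _ hF, hp]
  exact (Polynomial.natDegree_pow_le_of_le c h1).trans (by simp)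

/-- The primitive vectors. -/
theorem exists_prim {k : Type} [Field k] [CharZero k] (a b h : ℕ) (ha : h < a) (hb : h < b) :
    ∃ f : MvPolynomial (Fin 2) k, f ∈ homogeneousSubmodule (Fin 2) k h ∧
      (X 0 + X 1 : MvPolynomial (Fin 2) k) ^ (a + b - 1 - 2 * h) * f ∈
        Ideal.span {(X 0 : MvPolynomial (Fin 2) k) ^ a, (X 1 : MvPolynomial (Fin 2) k) ^ b} ∧
      (X 0 + X 1 : MvPolynomial (Fin 2) k) ^ (a + b - 2 - 2 * h) * f ∉
        Ideal.span {(X 0 : MvPolynomial (Fin 2) k) ^ a, (X 1 : MvPolynomial (Fin 2) k) ^ b} := by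
  obtain ⟨F, hF0, hFd, hFc⟩ := exists_poly (k := k) (a + b - 1 - 2 * h) (a - h) h
  have hdeg : F.natDegree ≤ h := by
    rw [Polynomial.natDegree_le_iff_coeff_eq_zero]
    intro i hi
    exact hFd i hi
  refine ⟨F.homogenize h, F.isHomogeneous_homogenize, ?_, ?_⟩
  · rw [one_add_X_hom _ _ _ hdeg, mem_ideal_iff]
    intro m h1 h2
    rw [Polynomial.coeff_homogenize]
    split_ifs with h3
    · exact hFc _ (by omega) (by omega)
    · rfl
  · rw [one_add_X_hom _ _ _ hdeg, mem_ideal_iff]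
    intro H
    apply hF0
    refine key_poly (a + b - 2 - 2 * h) (a - 1 - h) (by omega) (h + 1) F hFd ?_
    intro i h1 h2
    have := H (Finsupp.single 0 i + Finsupp.single 1 (a + b - 2 - 2 * h + h - i))
      (by simp; omega) (by simp; omega)
    rw [Polynomial.coeff_homogenize, if_pos (by simp; omega)] at this
    simpa using this

theorem sum_dims (N m : ℕ) (h : 2 * m ≤ N + 1) :
    ∑ i ∈ Finset.range m, (N - 2 * i) = m * (N + 1 - m) := by
  induction m with
  | zero => simp
  | succ m ih =>
    rw [Finset.sum_range_succ, ih (by omega)]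
    obtain ⟨t, rfl⟩ : ∃ t, N = 2 * m + 1 + t := ⟨N - (2 * m + 1), by omega⟩
    rw [show 2 * m + 1 + t + 1 - m = m + 2 + t by omega,
      show 2 * m + 1 + t - 2 * m = 1 + t by omega,
      show 2 * m + 1 + t + 1 - (m + 1) = m + 1 + t by omega]
    ring

theorem card_dims (a b : ℕ) (ha : 1 ≤ a) (hb : 1 ≤ b) :
    Fintype.card (Σ h : Fin (min a b), Fin (a + b - 1 - 2 * (h : ℕ))) = a * b := by
  rw [Fintype.card_sigma]
  simp only [Fintype.card_fin]
  rw [Fin.sum_univ_eq_sum_range (fun i => a + b - 1 - 2 * i), sum_dims _ _ (by omega)]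
  rcases le_total a b with h | h
  · rw [min_eq_left h, show a + b - 1 + 1 - a = b by omega]
  · rw [min_eq_right h, show a + b - 1 + 1 - b = a by omega, mul_comm]

theorem quot_finrank {k : Type} [Field k] (a b : ℕ) (I : Ideal (MvPolynomial (Fin 2) k))
    (hI : ∀ p, p ∈ I ↔ ∀ m : Fin 2 →₀ ℕ, m 0 < a → m 1 < b → coeff m p = 0) :
    FiniteDimensional k (MvPolynomial (Fin 2) k ⧸ I) ∧
      Module.finrank k (MvPolynomial (Fin 2) k ⧸ I) ≤ a * b := by
  let φ : MvPolynomial (Fin 2) k →ₗ[k] (Fin a × Fin b → k) :=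
    LinearMap.pi fun q => lcoeff k (Finsupp.single 0 (q.1 : ℕ) + Finsupp.single 1 (q.2 : ℕ))
  have hker : LinearMap.ker φ = I.restrictScalars k := by
    ext p
    rw [LinearMap.mem_ker, Submodule.restrictScalars_mem, hI]
    constructor
    · intro h m h1 h2
      have := congrFun h (⟨m 0, h1⟩, ⟨m 1, h2⟩)
      have hm : Finsupp.single 0 (m 0) + Finsupp.single 1 (m 1) = m := by
        ext i; fin_cases i <;> simp
      simpa [φ, hm] using this
    · intro h
      ext q
      exact h _ (by simp) (by simp)
  let ψ := (Submodule.liftQ (I.restrictScalars k) φ hker.ge) ∘ₗ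
    (Submodule.Quotient.restrictScalarsEquiv k I).symm.toLinearMap
  have hψ : Function.Injective ψ := by
    have : Function.Injective (Submodule.liftQ (I.restrictScalars k) φ hker.ge) := by
      rw [← LinearMap.ker_eq_bot, Submodule.ker_liftQ_eq_bot _ _ _ hker.le]
    exact this.comp (LinearEquiv.injective _)
  refine ⟨Module.Finite.of_injective ψ hψ, ?_⟩
  simpa using LinearMap.finrank_le_finrank_of_injective hψ

/-- Projection to the graded pieces. -/
theorem exists_proj {k : Type} [Field k] (a b : ℕ) (I : Ideal (MvPolynomial (Fin 2) k))
    (hI : ∀ p, p ∈ I ↔ ∀ m : Fin 2 →₀ ℕ, m 0 < a → m 1 < b → coeff m p = 0) (n : ℕ) :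
    ∃ P : (MvPolynomial (Fin 2) k ⧸ I) →ₗ[k] (MvPolynomial (Fin 2) k ⧸ I),
      (∀ x ∈ quotGr I n, P x = x) ∧ ∀ m, m ≠ n → ∀ x ∈ quotGr I m, P x = 0 := by
  have hle : I.restrictScalars k ≤ LinearMap.ker ((Ideal.Quotient.mkₐ k I).toLinearMap ∘ₗ
      (homogeneousComponent n : MvPolynomial (Fin 2) k →ₗ[k] MvPolynomial (Fin 2) k)) := by
    intro p hp
    rw [LinearMap.mem_ker]
    change Ideal.Quotient.mk I (homogeneousComponent n p) = 0
    rw [Ideal.Quotient.eq_zero_iff_mem, hI]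
    rw [Submodule.restrictScalars_mem, hI] at hp
    intro m h1 h2
    rw [coeff_homogeneousComponent, hp m h1 h2, ite_self]
  let P := (Submodule.liftQ (I.restrictScalars k) _ hle) ∘ₗ
    (Submodule.Quotient.restrictScalarsEquiv k I).symm.toLinearMap
  have hP : ∀ p, P (Ideal.Quotient.mk I p) = Ideal.Quotient.mk I (homogeneousComponent n p) := by
    intro p; rfl
  refine ⟨P, ?_, ?_⟩
  · rintro _ ⟨p, hp, rfl⟩
    change P (Ideal.Quotient.mk I p) = Ideal.Quotient.mk I p
    rw [hP, homogeneousComponent_of_mem hp, if_pos rfl]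
  · rintro m hm _ ⟨p, hp, rfl⟩
    change P (Ideal.Quotient.mk I p) = 0
    rw [hP, homogeneousComponent_of_mem hp, if_neg hm.symm, map_zero]

theorem smul_gr {k : Type} [Field k] (I : Ideal (MvPolynomial (Fin 2) k)) (c d : ℕ)
    (x : MvPolynomial (Fin 2) k ⧸ I) (hx : x ∈ quotGr I d) :
    (X 0 + X 1 : MvPolynomial (Fin 2) k) ^ c • x ∈ quotGr I (d + c) := by
  obtain ⟨p, hp, rfl⟩ := hx
  refine ⟨(X 0 + X 1) ^ c * p, ?_, rfl⟩
  have h1 : (X 0 + X 1 : MvPolynomial (Fin 2) k).IsHomogeneous 1 :=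
    (isHomogeneous_X k 0).add (isHomogeneous_X k 1)
  have h2 := (h1.pow c).mul (show p.IsHomogeneous d from hp)
  rw [one_mul, add_comm c d] at h2
  exact h2

theorem pow_smul_smul {k : Type} [Field k] (I : Ideal (MvPolynomial (Fin 2) k)) (c j : ℕ)
    (z : MvPolynomial (Fin 2) k) (r : k) (x : MvPolynomial (Fin 2) k ⧸ I) :
    z ^ c • (r • (z ^ j • x)) = r • (z ^ (c + j) • x) := by
  rw [smul_comm, smul_smul (M := MvPolynomial (Fin 2) k), ← pow_add]

theorem decomp_SL {k : Type} [Field k] (a b : ℕ) (I : Ideal (MvPolynomial (Fin 2) k))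
    (hI : ∀ p, p ∈ I ↔ ∀ m : Fin 2 →₀ ℕ, m 0 < a → m 1 < b → coeff m p = 0)
    (e : Fin (min a b) → (MvPolynomial (Fin 2) k ⧸ I))
    (hD : IsDecomp (quotGr I) (X 0 + X 1 : MvPolynomial (Fin 2) k)
        (fun h : Fin (min a b) => (h : ℕ)) (fun h : Fin (min a b) => a + b - 1 - 2 * (h : ℕ)) e) :
    IsSLAction (quotGr I) (X 0 + X 1 : MvPolynomial (Fin 2) k) := by
  obtain ⟨_, hdeg, _, hli, hsp⟩ := hD
  set z := (X 0 + X 1 : MvPolynomial (Fin 2) k) with hz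
  -- every homogeneous element is a combination of basis elements of the same degree
  have hrep : ∀ n, ∀ x ∈ quotGr I n,
      ∃ g : (Σ h : Fin (min a b), Fin (a + b - 1 - 2 * (h : ℕ))) → k,
      (∀ q, (q.1 : ℕ) + q.2 ≠ n → g q = 0) ∧ x = ∑ q, g q • (z ^ (q.2 : ℕ) • e q.1) := by
    intro n x hx
    obtain ⟨P, hP1, hP2⟩ := exists_proj a b I hI n
    have hxs : x ∈ Submodule.span k (Set.range (fun q : Σ h : Fin (min a b),
        Fin (a + b - 1 - 2 * (h : ℕ)) => z ^ (q.2 : ℕ) • e q.1)) := by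
      rw [hsp]; trivial
    obtain ⟨g, hg⟩ := (Submodule.mem_span_range_iff_exists_fun k).1 hxs
    refine ⟨fun q => if (q.1 : ℕ) + q.2 = n then g q else 0, fun q hq => if_neg hq, ?_⟩
    rw [← hP1 x hx, ← hg, map_sum]
    apply Finset.sum_congr rfl
    intro q _
    rw [map_smul]
    change _ = (if (q.1 : ℕ) + q.2 = n then g q else 0) • _
    split_ifs with h
    · rw [hP1 _ (h ▸ hdeg q.1 q.2 q.2.2)]
    · rw [hP2 _ h _ (hdeg q.1 q.2 q.2.2), smul_zero, zero_smul]
  intro c d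
  by_cases H : ∀ h : Fin (min a b), (h : ℕ) ≤ d → d + h ≤ a + b - 2 → d + c + h ≤ a + b - 2
  · left
    intro x hx hx0
    obtain ⟨g, hg0, rfl⟩ := hrep d x hx
    suffices hall : ∀ q, g q = 0 by simp [hall]
    rw [Fintype.linearIndependent_iff] at hli
    have hlt : ∀ q : (Σ h : Fin (min a b), Fin (a + b - 1 - 2 * (h : ℕ))),
        (q.1 : ℕ) + q.2 = d → (q.2 : ℕ) + c < a + b - 1 - 2 * (q.1 : ℕ) := by
      intro q hq
      have h2 : (q.2 : ℕ) < a + b - 1 - 2 * (q.1 : ℕ) := q.2.2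
      have := H q.1 (by omega) (by omega)
      omega
    have := hli (fun q => if hq : c ≤ q.2 ∧ (q.1 : ℕ) + q.2 = d + c then
      g ⟨q.1, ⟨q.2 - c, by have : (q.2 : ℕ) < a + b - 1 - 2 * (q.1 : ℕ) := q.2.2; omega⟩⟩ else 0) ?_
    · intro q
      by_cases hq : (q.1 : ℕ) + q.2 = d
      · have h3 := this ⟨q.1, ⟨q.2 + c, hlt q hq⟩⟩
        simp only [] at h3
        rw [dif_pos ⟨by omega, by omega⟩] at h3
        simpa using h3
      · exact hg0 q hq
    · rw [← hx0, Finset.smul_sum]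
      symm
      apply Finset.sum_bij_ne_zero (fun q _ hne => (⟨q.1, ⟨q.2 + c, hlt q (by
          by_contra h
          rw [hg0 q h] at hne
          simp at hne)⟩⟩ : (Σ h : Fin (min a b), Fin (a + b - 1 - 2 * (h : ℕ)))))
      · intros; simp
      · rintro ⟨h1, j1⟩ _ _ ⟨h2, j2⟩ _ _ heq
        simp only [Sigma.mk.injEq] at heq
        obtain ⟨rfl, heq⟩ := heq
        simp [Fin.ext_iff] at heq ⊢
        exact heq
      · rintro ⟨h, j⟩ _ hne
        by_cases hq : c ≤ j ∧ (h : ℕ) + j = d + c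
        · simp only [] at hne
          rw [dif_pos hq] at hne
          refine ⟨⟨h, ⟨j - c, by omega⟩⟩, Finset.mem_univ _, ?_, ?_⟩
          · intro h0
            apply hne
            rw [pow_smul_smul] at h0
            simpa [hq.1] using h0
          · simp [hq.1]
        · simp only [] at hne
          rw [dif_neg hq] at hne
          simp at hne
      · intro q _ hne
        have hq : (q.1 : ℕ) + q.2 = d := by
          by_contra h
          rw [hg0 q h] at hne
          simp at hne
        simp only []
        rw [dif_pos ⟨by omega, by omega⟩]
        refine (pow_smul_smul I c _ z _ _).trans ?_
        simp [add_comm]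
  · right
    push Not at H
    obtain ⟨h0, H1, H2, H3⟩ := H
    intro w hw
    obtain ⟨g, hg0, rfl⟩ := hrep (d + c) w hw
    have hlow : ∀ q : (Σ h : Fin (min a b), Fin (a + b - 1 - 2 * (h : ℕ))),
        (q.1 : ℕ) + q.2 = d + c → (q.1 : ℕ) ≤ d ∧ c ≤ q.2 := by
      intro q hq
      have h2 : (q.2 : ℕ) < a + b - 1 - 2 * (q.1 : ℕ) := q.2.2
      omega
    refine ⟨∑ q, g q • (z ^ ((q.2 : ℕ) - c) • e q.1), ?_, ?_⟩
    · apply Submodule.sum_mem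
      intro q _
      by_cases hq : (q.1 : ℕ) + q.2 = d + c
      · apply Submodule.smul_mem
        have h4 := hlow q hq
        have h5 := hdeg q.1 (q.2 - c) (by
          have : (q.2 : ℕ) < a + b - 1 - 2 * (q.1 : ℕ) := q.2.2
          simp only []; omega)
        rwa [show (q.1 : ℕ) + (q.2 - c) = d by omega] at h5
      · rw [hg0 q hq, zero_smul]; exact Submodule.zero_mem _
    · rw [Finset.smul_sum]
      apply Finset.sum_congr rfl
      intro q _
      by_cases hq : (q.1 : ℕ) + q.2 = d + c
      · rw [pow_smul_smul,
          Nat.add_sub_cancel' (hlow q hq).2]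
      · rw [hg0 q hq]; simp

theorem exists_decomp {k : Type} [Field k] [CharZero k] (a b : ℕ) (ha : 1 ≤ a) (hb : 1 ≤ b)
    (I : Ideal (MvPolynomial (Fin 2) k))
    (hIdef : I = Ideal.span
      {(X 0 : MvPolynomial (Fin 2) k) ^ a, (X 1 : MvPolynomial (Fin 2) k) ^ b}) :
    ∃ e : Fin (min a b) → (MvPolynomial (Fin 2) k ⧸ I),
    IsDecomp (quotGr I) (X 0 + X 1 : MvPolynomial (Fin 2) k)
        (fun h : Fin (min a b) => (h : ℕ)) (fun h : Fin (min a b) => a + b - 1 - 2 * (h : ℕ)) e := by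
  have hI : ∀ p, p ∈ I ↔ ∀ m : Fin 2 →₀ ℕ, m 0 < a → m 1 < b → coeff m p = 0 := by
    intro p; rw [hIdef]; exact mem_ideal_iff a b p
  have hf := fun h : Fin (min a b) => exists_prim (k := k) a b h (by omega) (by omega)
  rw [← hIdef] at hf
  choose f hf1 hf2 hf3 using hf
  set z := (X 0 + X 1 : MvPolynomial (Fin 2) k) with hz
  let e : Fin (min a b) → (MvPolynomial (Fin 2) k ⧸ I) := fun h => Ideal.Quotient.mk I (f h)
  have he1 : ∀ h : Fin (min a b), e h ∈ quotGr I h := fun h => ⟨f h, hf1 h, rfl⟩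
  have he2 : ∀ h : Fin (min a b), z ^ (a + b - 1 - 2 * (h : ℕ)) • e h = 0 := by
    intro h
    exact Ideal.Quotient.eq_zero_iff_mem.2 (hf2 h)
  have he3 : ∀ h : Fin (min a b), z ^ (a + b - 2 - 2 * (h : ℕ)) • e h ≠ 0 := by
    intro h h0
    exact hf3 h (Ideal.Quotient.eq_zero_iff_mem.1 h0)
  have hdeg : ∀ (h : Fin (min a b)) (j : ℕ), z ^ j • e h ∈ quotGr I (h + j) := fun h j =>
    smul_gr I j h _ (he1 h)
  have hkill : ∀ (h : Fin (min a b)) (j : ℕ), a + b - 1 - 2 * (h : ℕ) ≤ j → z ^ j • e h = 0 := by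
    intro h j hj
    rw [← Nat.sub_add_cancel hj, pow_add, mul_smul, he2, smul_zero]
  have hli : LinearIndependent k (fun q : Σ h : Fin (min a b),
      Fin (a + b - 1 - 2 * (h : ℕ)) => z ^ (q.2 : ℕ) • e q.1) := by
    rw [Fintype.linearIndependent_iff]
    intro g hg
    have main : ∀ N : ℕ, ∀ q : (Σ h : Fin (min a b), Fin (a + b - 1 - 2 * (h : ℕ))),
        (q.1 : ℕ) = N → g q = 0 := by
      intro N
      induction N using Nat.strong_induction_on with
      | _ N ih =>
        intro q0 hq0
        have hj0 : (q0.2 : ℕ) < a + b - 1 - 2 * (q0.1 : ℕ) := q0.2.2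
        have hh0 := q0.1.2
        obtain ⟨P, hP1, hP2⟩ := exists_proj a b I hI (a + b - 2 - q0.1)
        have h1 := congrArg (fun x => P (z ^ (a + b - 2 - 2 * (q0.1 : ℕ) - q0.2) • x)) hg
        simp only [smul_zero, map_zero, Finset.smul_sum, map_sum] at h1
        rw [Finset.sum_eq_single q0] at h1
        · rw [pow_smul_smul,
            show a + b - 2 - 2 * (q0.1 : ℕ) - q0.2 + q0.2 = a + b - 2 - 2 * (q0.1 : ℕ) by omega,
            map_smul, hP1] at h1
          · exact (smul_eq_zero.1 h1).resolve_right (he3 _)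
          · have := hdeg q0.1 (a + b - 2 - 2 * (q0.1 : ℕ))
            rwa [show (q0.1 : ℕ) + (a + b - 2 - 2 * (q0.1 : ℕ)) = a + b - 2 - q0.1 by omega] at this
        · intro q _ hne
          have hj : (q.2 : ℕ) < a + b - 1 - 2 * (q.1 : ℕ) := q.2.2
          have hh := q.1.2
          rw [pow_smul_smul, map_smul]
          by_cases hlt : (q.1 : ℕ) < N
          · rw [ih _ hlt q rfl, zero_smul]
          by_cases hs : (q.1 : ℕ) + q.2 = q0.1 + q0.2
          · have hgt : (q0.1 : ℕ) < q.1 := by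
              by_contra hle
              apply hne
              have h3 : q.1 = q0.1 := Fin.ext (by omega)
              rcases q with ⟨h, j⟩
              rcases q0 with ⟨h2, j2⟩
              simp only at h3
              subst h3
              simp only [Sigma.mk.injEq, heq_eq_eq, true_and]
              simp only at hs
              exact Fin.ext (by omega)
            rw [hkill _ _ (by omega), map_zero, smul_zero]
          · rw [hP2 _ _ _ (hdeg _ _), smul_zero]
            omega
        · intro h; exact absurd (Finset.mem_univ _) h
    exact fun q => main _ q rfl
  refine ⟨e, ?_, fun h j _ => hdeg h j, he2, hli, ?_⟩
  · intro h
    have := h.2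
    simp only []
    omega
  · obtain ⟨hfin, hrk⟩ := quot_finrank a b I hI
    apply hli.span_eq_top_of_card_eq_finrank'
    have h1 := hli.fintype_card_le_finrank
    have h2 := card_dims a b ha hb
    omega

/-- Let `k` have characteristic zero, `R = k[x_1, x_2]`, and
`M = R/(x_1^a, x_2^b)` with `a, b ≥ 1`.  Then `l = x_1 + x_2` is a strong Lefschetz element
for `M`, and as a graded `S = k[l]`-module, `M` decomposes as
`M ≅ ⊕_{h=0}^{min(a,b)-1} S(-h)/(l^{a+b-1-2h})`. -/
theorem statement14 {k : Type} [Field k] [CharZero k] (a b : ℕ) (ha : 1 ≤ a) (hb : 1 ≤ b) :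
    ((X 0 + X 1 : MvPolynomial (Fin 2) k) ∈ homogeneousSubmodule (Fin 2) k 1 ∧
      IsSLAction
        (quotGr (Ideal.span {(X 0 : MvPolynomial (Fin 2) k) ^ a, (X 1 : MvPolynomial (Fin 2) k) ^ b}))
        (X 0 + X 1 : MvPolynomial (Fin 2) k)) ∧
    ∃ e : Fin (min a b) →
        (MvPolynomial (Fin 2) k ⧸
          Ideal.span {(X 0 : MvPolynomial (Fin 2) k) ^ a, (X 1 : MvPolynomial (Fin 2) k) ^ b}),
      IsDecomp
        (quotGr (Ideal.span {(X 0 : MvPolynomial (Fin 2) k) ^ a, (X 1 : MvPolynomial (Fin 2) k) ^ b}))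
        (X 0 + X 1 : MvPolynomial (Fin 2) k)
        (fun h : Fin (min a b) => (h : ℕ)) (fun h : Fin (min a b) => a + b - 1 - 2 * (h : ℕ)) e := by
  obtain ⟨e, he⟩ := exists_decomp (k := k) a b ha hb _ rfl
  exact ⟨⟨(isHomogeneous_X k 0).add (isHomogeneous_X k 1),
    decomp_SL a b _ (mem_ideal_iff a b) e he⟩, e, he⟩
end

section
/- Let k have characteristic zero, R = k[x_1,…,x_n], and let I = (x_1^{a_1},…,x_n^{a_n}) with all a_i ≥ 1 be a monomial complete intersection. Then R/I has the strong Lefschetz property. -/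
open MvPolynomial TensorProduct

namespace SLP

variable {k : Type} [Field k] {n : ℕ}

/-- one-variable lowering operator -/
noncomputable def Fi (b : Fin n → ℕ) (i : Fin n) (f : MvPolynomial (Fin n) k) :
    MvPolynomial (Fin n) k :=
  (b i : MvPolynomial (Fin n) k) * pderiv i f - X i * pderiv i (pderiv i f)

/-- the lowering operator -/
noncomputable def F (b : Fin n → ℕ) (f : MvPolynomial (Fin n) k) : MvPolynomial (Fin n) k :=
  ∑ i, Fi b i f

/-- the linear form -/
noncomputable def L (k : Type) [Field k] (n : ℕ) : MvPolynomial (Fin n) k := ∑ i, X i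

/-- the ideal -/
noncomputable def J (k : Type) [Field k] {n : ℕ} (b : Fin n → ℕ) : Ideal (MvPolynomial (Fin n) k) :=
  Ideal.span {f : MvPolynomial (Fin n) k | ∃ i : Fin n, f = X i ^ (b i + 1)}

lemma F_zero (b : Fin n → ℕ) : F b (0 : MvPolynomial (Fin n) k) = 0 := by
  simp [F, Fi]

lemma F_add (b : Fin n → ℕ) (f g : MvPolynomial (Fin n) k) : F b (f + g) = F b f + F b g := by
  simp only [F, Fi, map_add, ← Finset.sum_add_distrib]
  refine Finset.sum_congr rfl fun i _ => by ring

lemma F_int (b : Fin n → ℕ) (z : ℤ) (g : MvPolynomial (Fin n) k) :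
    F b ((z : MvPolynomial (Fin n) k) * g) = z * F b g := by
  simp only [F, Fi, Finset.mul_sum, ← zsmul_eq_mul, map_zsmul]
  refine Finset.sum_congr rfl fun i _ => by simp only [zsmul_eq_mul]; ring

lemma Fi_X_pow_mul_self (b : Fin n → ℕ) (i : Fin n) (f : MvPolynomial (Fin n) k) :
    Fi b i (X i ^ (b i + 1) * f) ∈ J k b := by
  have : Fi b i (X i ^ (b i + 1) * f) = X i ^ (b i + 1) *
      (- ((b i : MvPolynomial (Fin n) k) + 2) * pderiv i f - X i * pderiv i (pderiv i f)) := by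
    rcases hb : b i with _ | c
    · simp only [Fi, hb, pderiv_mul, pderiv_pow, pderiv_X_self, map_add, zero_add, pow_one]
      push_cast
      simp
      ring
    · simp only [Fi, hb, pderiv_mul, pderiv_pow, pderiv_X_self, map_add, Nat.add_sub_cancel,
        Derivation.map_natCast, pderiv_one]
      push_cast
      ring
  rw [this]
  exact Ideal.mul_mem_right _ _ (Ideal.subset_span ⟨i, rfl⟩)

lemma Fi_X_pow_mul_ne (b : Fin n → ℕ) {i j : Fin n} (h : j ≠ i) (f : MvPolynomial (Fin n) k) :
    Fi b i (X j ^ (b j + 1) * f) ∈ J k b := by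
  have : Fi b i (X j ^ (b j + 1) * f) = X j ^ (b j + 1) * Fi b i f := by
    simp [Fi, pderiv_mul, pderiv_pow, pderiv_X_of_ne h]
    ring
  rw [this]
  exact Ideal.mul_mem_right _ _ (Ideal.subset_span ⟨j, rfl⟩)

lemma F_mem (b : Fin n → ℕ) {f : MvPolynomial (Fin n) k} (hf : f ∈ J k b) : F b f ∈ J k b := by
  have key : ∀ (i : Fin n) (g : MvPolynomial (Fin n) k), F b (X i ^ (b i + 1) * g) ∈ J k b := by
    intro i g
    refine Ideal.sum_mem _ fun j _ => ?_
    by_cases h : i = j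
    · subst h; exact Fi_X_pow_mul_self b i g
    · exact Fi_X_pow_mul_ne b h g
  suffices h : ∀ g : MvPolynomial (Fin n) k, F b (f * g) ∈ J k b by simpa using h 1
  unfold J at hf
  induction hf using Submodule.span_induction with
  | mem x h =>
    obtain ⟨i, rfl⟩ := h
    exact key i
  | zero => intro g; rw [zero_mul, F_zero]; exact zero_mem _
  | add x y _ _ hx hy => intro g; rw [add_mul, F_add]; exact add_mem (hx g) (hy g)
  | smul a x _ h =>
    intro g
    rw [smul_eq_mul, mul_comm a x, mul_assoc]
    exact h _

lemma Fi_X_mul (b : Fin n → ℕ) (i j : Fin n) (f : MvPolynomial (Fin n) k) :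
    Fi b i (X j * f) = X j * Fi b i f +
      if i = j then (b i : MvPolynomial (Fin n) k) * f - 2 * (X i * pderiv i f) else 0 := by
  by_cases h : i = j
  · subst h
    simp [Fi, pderiv_mul]
    ring
  · simp [Fi, pderiv_mul, pderiv_X_of_ne (Ne.symm h), h]
    ring

lemma F_L_mul (b : Fin n → ℕ) {d : ℕ} {f : MvPolynomial (Fin n) k} (hf : f.IsHomogeneous d) :
    F b (L k n * f) = L k n * F b f +
      (((∑ i, b i : ℕ) : ℤ) - 2 * d : ℤ) * f := by
  have e := hf.sum_X_mul_pderiv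
  have h1 : F b (L k n * f) = ∑ j, F b (X j * f) := by
    simp only [F, Fi, L, Finset.sum_mul, map_sum, Finset.mul_sum]
    rw [Finset.sum_comm]
    simp only [Finset.sum_sub_distrib]
  rw [h1]
  simp only [F, Fi_X_mul, Finset.sum_add_distrib, Finset.sum_ite_eq, Finset.sum_ite_eq',
    Finset.mem_univ, if_true, Finset.sum_sub_distrib, ← Finset.mul_sum, ← Finset.sum_mul, e]
  rw [← L]
  push_cast
  rw [nsmul_eq_mul]
  ring

lemma F_homog (b : Fin n → ℕ) {d : ℕ} {f : MvPolynomial (Fin n) k} (hf : f.IsHomogeneous d) :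
    (F b f).IsHomogeneous (d - 1) := by
  refine IsHomogeneous.sum _ _ _ fun i _ => ?_
  refine IsHomogeneous.sub ?_ ?_
  · rw [← nsmul_eq_mul]
    exact (homogeneousSubmodule (Fin n) k (d - 1)).smul_of_tower_mem (b i) hf.pderiv
  · rcases d with _ | _ | d
    · rw [← totalDegree_zero_iff_isHomogeneous, totalDegree_eq_zero_iff_eq_C] at hf
      rw [hf, pderiv_C]; simp [isHomogeneous_zero]
    · have h := hf.pderiv (i := i)
      rw [← totalDegree_zero_iff_isHomogeneous, totalDegree_eq_zero_iff_eq_C] at h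
      rw [h, pderiv_C]; simp [isHomogeneous_zero]
    · have := (isHomogeneous_X k i).mul ((hf.pderiv (i := i)).pderiv (i := i))
      have e : 1 + (d + 1 + 1 - 1 - 1) = d + 1 + 1 - 1 := by omega
      rwa [e] at this

lemma L_homog : (L k n).IsHomogeneous 1 :=
  IsHomogeneous.sum _ _ _ fun i _ => isHomogeneous_X k i

lemma Lpow_homog {d : ℕ} {f : MvPolynomial (Fin n) k} (hf : f.IsHomogeneous d) (m : ℕ) :
    (L k n ^ m * f).IsHomogeneous (d + m) := by
  have := (L_homog (k := k) (n := n)).pow m |>.mul hf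
  rwa [one_mul, add_comm] at this

lemma F_Lpow (b : Fin n → ℕ) {d : ℕ} {f : MvPolynomial (Fin n) k} (hf : f.IsHomogeneous d)
    (m : ℕ) : F b (L k n ^ (m + 1) * f) = L k n ^ (m + 1) * F b f +
      (((m : ℤ) + 1) * (((∑ i, b i : ℕ) : ℤ) - 2 * d - m) : ℤ) * (L k n ^ m * f) := by
  induction m with
  | zero => simp only [zero_add, pow_one, F_L_mul b hf]; push_cast; ring
  | succ m ih =>
    rw [pow_succ', mul_assoc, F_L_mul b (Lpow_homog hf (m + 1)), ih]
    push_cast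
    ring

lemma Fpow_homog (b : Fin n → ℕ) {d : ℕ} {f : MvPolynomial (Fin n) k} (hf : f.IsHomogeneous d)
    (m : ℕ) : ((F b)^[m] f).IsHomogeneous (d - m) := by
  induction m with
  | zero => exact hf
  | succ m ih =>
    rw [Function.iterate_succ_apply']
    exact F_homog b ih

lemma Fpow_mem (b : Fin n → ℕ) {f : MvPolynomial (Fin n) k} (hf : f ∈ J k b)
    (m : ℕ) : ((F b)^[m] f) ∈ J k b := by
  induction m with
  | zero => exact hf
  | succ m ih =>
    rw [Function.iterate_succ_apply']
    exact F_mem b ih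

lemma L_Fpow (b : Fin n → ℕ) {d : ℕ} {f : MvPolynomial (Fin n) k} (hf : f.IsHomogeneous d)
    (m : ℕ) (hm : m ≤ d) : L k n * (F b)^[m + 1] f = (F b)^[m + 1] (L k n * f) +
      (((m : ℤ) + 1) * (2 * d - ((∑ i, b i : ℕ) : ℤ) - m) : ℤ) * ((F b)^[m] f) := by
  induction m with
  | zero =>
    simp only [zero_add, Function.iterate_one, Function.iterate_zero, id, F_L_mul b hf]
    push_cast; ring
  | succ m ih =>
    have h := F_L_mul b (Fpow_homog b hf (m + 1))
    rw [ih (by omega), F_add, F_int, ← Function.iterate_succ_apply' (F b),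
      ← Function.iterate_succ_apply' (F b), ← Function.iterate_succ_apply' (F b)] at h
    push_cast [Nat.cast_sub hm] at h ⊢
    linear_combination -h

lemma cancel [CharZero k] (b : Fin n → ℕ) {z : ℤ} (hz : z ≠ 0) {f : MvPolynomial (Fin n) k}
    (h : (z : MvPolynomial (Fin n) k) * f ∈ J k b) : f ∈ J k b := by
  have h2 := Ideal.mul_mem_left _ (C ((z : k)⁻¹)) h
  rwa [← mul_assoc, ← map_intCast (C : k →+* MvPolynomial (Fin n) k), ← C_mul,
    inv_mul_cancel₀ (Int.cast_ne_zero.mpr hz), C_1, one_mul] at h2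

lemma lowest [CharZero k] (b : Fin n → ℕ) {d : ℕ} {v : MvPolynomial (Fin n) k}
    (hv : v.IsHomogeneous d) (hF : F b v ∈ J k b) (m : ℕ) (hm : 2 * d + m ≤ ∑ i, b i)
    (hE : L k n ^ m * v ∈ J k b) : v ∈ J k b := by
  induction m with
  | zero => simpa using hE
  | succ m ih =>
    refine ih (by omega) ?_
    have h := F_mem b hE
    rw [F_Lpow b hv] at h
    have h2 := (Ideal.add_mem_iff_right _ (Ideal.mul_mem_left _ _ hF)).mp h
    refine cancel b ?_ h2
    exact mul_ne_zero (by omega) (by omega)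

lemma inj [CharZero k] (b : Fin n → ℕ) (d : ℕ) : ∀ (m : ℕ), 2 * d + m ≤ ∑ i, b i →
    ∀ v : MvPolynomial (Fin n) k, v.IsHomogeneous d → L k n ^ m * v ∈ J k b → v ∈ J k b := by
  induction d with
  | zero =>
    intro m hm v hv h
    refine lowest b hv ?_ m hm h
    rw [← totalDegree_zero_iff_isHomogeneous, totalDegree_eq_zero_iff_eq_C] at hv
    rw [hv]
    simp [F, Fi]
  | succ d ih =>
    intro m hm v hv h
    refine lowest b hv ?_ m hm h
    refine ih (m + 1) (by omega) _ (F_homog b hv) ?_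
    have h1 : L k n ^ (m + 1) * v ∈ J k b := by
      rw [pow_succ', mul_assoc]; exact Ideal.mul_mem_left _ _ h
    have h2 := F_mem b h1
    rw [F_Lpow b hv] at h2
    exact (Ideal.add_mem_iff_left _ (Ideal.mul_mem_left _ _ h)).mp h2

lemma top_mem (b : Fin n → ℕ) {e : ℕ} (he : ∑ i, b i < e) {w : MvPolynomial (Fin n) k}
    (hw : w.IsHomogeneous e) : w ∈ J k b := by
  rw [w.as_sum]
  refine Ideal.sum_mem _ fun s hs => ?_
  have hd : ∑ i, s i = e := by
    have := hw (mem_support_iff.mp hs)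
    rw [← this]
    simp [Finsupp.weight_apply, Finsupp.sum_fintype]
  obtain ⟨i, -, hi⟩ := Finset.exists_lt_of_sum_lt (hd ▸ he)
  have : monomial s (coeff s w) =
      monomial (s - Finsupp.single i (b i + 1)) (coeff s w) * X i ^ (b i + 1) := by
    rw [X_pow_eq_monomial, monomial_mul, mul_one, tsub_add_cancel_of_le]
    exact Finsupp.single_le_iff.mpr hi
  rw [this]
  exact Ideal.mul_mem_left _ _ (Ideal.subset_span ⟨i, rfl⟩)

lemma highest [CharZero k] (b : Fin n → ℕ) {e : ℕ} {w : MvPolynomial (Fin n) k}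
    (hw : w.IsHomogeneous e) (hE : L k n * w ∈ J k b) (m : ℕ) (hme : m ≤ e)
    (hm : ∑ i, b i + m ≤ 2 * e) :
    ∃ z : ℤ, z ≠ 0 ∧ L k n ^ m * (F b)^[m] w - z * w ∈ J k b := by
  induction m with
  | zero => exact ⟨1, one_ne_zero, by simp⟩
  | succ m ih =>
    obtain ⟨z, hz, h⟩ := ih (by omega) (by omega)
    set c : ℤ := ((m : ℤ) + 1) * (2 * e - ((∑ i, b i : ℕ) : ℤ) - m) with hc
    have hc0 : c ≠ 0 := mul_ne_zero (by omega) (by omega)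
    refine ⟨c * z, mul_ne_zero hc0 hz, ?_⟩
    have h1 := L_Fpow b hw m (by omega)
    rw [← hc] at h1
    have : L k n ^ (m + 1) * (F b)^[m + 1] w - ((c * z : ℤ) : MvPolynomial (Fin n) k) * w =
        L k n ^ m * (F b)^[m + 1] (L k n * w) + c * (L k n ^ m * (F b)^[m] w - z * w) := by
      rw [pow_succ, mul_assoc, h1]
      push_cast
      ring
    rw [this]
    exact add_mem (Ideal.mul_mem_left _ _ (Fpow_mem b hE _)) (Ideal.mul_mem_left _ _ h)

lemma surj [CharZero k] (b : Fin n → ℕ) (t : ℕ) : ∀ (m d : ℕ), ∑ i, b i < d + m + t →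
    ∑ i, b i ≤ 2 * d + m →
    ∀ w : MvPolynomial (Fin n) k, w.IsHomogeneous (d + m) →
      ∃ v : MvPolynomial (Fin n) k, v.IsHomogeneous d ∧ L k n ^ m * v - w ∈ J k b := by
  induction t with
  | zero =>
    intro m d h1 h2 w hw
    refine ⟨0, isHomogeneous_zero _ _ _, ?_⟩
    rw [mul_zero, zero_sub]
    exact neg_mem (top_mem b h1 hw)
  | succ t ih =>
    intro m d h1 h2 w hw
    have hLw : (L k n * w).IsHomogeneous (d + (m + 1)) := by
      simpa [add_assoc] using Lpow_homog hw 1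
    obtain ⟨v, hv, h⟩ := ih (m + 1) d (by omega) (by omega) _ hLw
    have hw' : (w - L k n ^ m * v).IsHomogeneous (d + m) := hw.sub (Lpow_homog hv m)
    have hE : L k n * (w - L k n ^ m * v) ∈ J k b := by
      have := neg_mem h
      convert this using 1
      ring
    obtain ⟨z, hz, hh⟩ := highest b hw' hE m (by omega) (by omega)
    set u := (F b)^[m] (w - L k n ^ m * v) with hu
    have huh : u.IsHomogeneous d := by
      have := Fpow_homog b hw' m
      rwa [Nat.add_sub_cancel] at this
    refine ⟨v + C ((z : k)⁻¹) * u, hv.add (huh.C_mul _), ?_⟩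
    refine cancel b hz ?_
    have hzz : (z : MvPolynomial (Fin n) k) * C ((z : k)⁻¹) = 1 := by
      rw [← map_intCast (C : k →+* MvPolynomial (Fin n) k), ← C_mul,
        mul_inv_cancel₀ (Int.cast_ne_zero.mpr hz), C_1]
    convert hh using 1
    linear_combination (L k n ^ m * u) * hzz

end SLP

/-- Let `k` have characteristic zero, `R = k[x_1, …, x_n]`, and let
`I = (x_1^{a_1}, …, x_n^{a_n})` with all `a_i ≥ 1` be a monomial complete intersection.
Then `R/I` has the strong Lefschetz property. -/
theorem statement16 {k : Type} [Field k] [CharZero k] (n : ℕ) (a : Fin n → ℕ)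
    (ha : ∀ i, 1 ≤ a i) :
    ∃ l : MvPolynomial (Fin n) k, l ∈ homogeneousSubmodule (Fin n) k 1 ∧
      IsSLAction
        (quotGr (Ideal.span {f : MvPolynomial (Fin n) k | ∃ i : Fin n, f = X i ^ a i}))
        l := by
  obtain ⟨b, rfl⟩ : ∃ b : Fin n → ℕ, a = fun i => b i + 1 :=
    ⟨fun i => a i - 1, funext fun i => (Nat.sub_add_cancel (ha i)).symm⟩
  refine ⟨SLP.L k n, SLP.L_homog, ?_⟩
  change IsSLAction (quotGr (SLP.J k b)) (SLP.L k n)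
  intro m d
  rcases le_total (2 * d + m) (∑ i, b i) with h | h
  · left
    rintro _ ⟨v, hv, rfl⟩ h0
    refine Ideal.Quotient.eq_zero_iff_mem.mpr (SLP.inj b d m h v hv ?_)
    exact Ideal.Quotient.eq_zero_iff_mem.mp h0
  · right
    rintro _ ⟨w, hw, rfl⟩
    obtain ⟨v, hv, hh⟩ := SLP.surj b (∑ i, b i + 1) m d (by omega) h w hw
    exact ⟨_, ⟨v, hv, rfl⟩, Ideal.Quotient.eq.mpr hh⟩
end

section
/- Let k be a field of characteristic p > 0 and let A = k[x,y]/(x^p, y^p). Then A does not have the strong Lefschetz property: for every linear form l of A, the map l^p : A_0 → A_p is neither injective nor surjective. -/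
open MvPolynomial TensorProduct

theorem aux_pow_mem {k : Type} [Field k] (p : ℕ) [Fact p.Prime] [CharP k p]
    (f : MvPolynomial (Fin 2) k) (hf : f.IsHomogeneous 1) :
    f ^ p ∈ Ideal.span {(X 0 : MvPolynomial (Fin 2) k) ^ p,
        (X 1 : MvPolynomial (Fin 2) k) ^ p} := by
  have h : f ∈ Ideal.span (Set.image (X : Fin 2 → MvPolynomial (Fin 2) k) Set.univ) := by
    rw [mem_ideal_span_X_image]
    intro m hm
    by_contra hcon
    push Not at hcon
    have h0 : m = 0 := by
      ext i
      simpa using hcon i (Set.mem_univ _)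
    have := hf (mem_support_iff.1 hm)
    simp [h0] at this
  have hs : (Set.image (X : Fin 2 → MvPolynomial (Fin 2) k) Set.univ) = {X 0, X 1} := by
    ext g
    simp [Fin.exists_fin_two, eq_comm]
  rw [hs, Ideal.mem_span_pair] at h
  obtain ⟨a, b, rfl⟩ := h
  rw [add_pow_char, mul_pow, mul_pow]
  exact Ideal.mem_span_pair.2 ⟨_, _, rfl⟩

theorem aux_not_mem {k : Type} [Field k] (p : ℕ) (hp : 2 ≤ p) :
    (X 0 : MvPolynomial (Fin 2) k) ^ (p - 1) * X 1 ∉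
      Ideal.span {(X 0 : MvPolynomial (Fin 2) k) ^ p,
        (X 1 : MvPolynomial (Fin 2) k) ^ p} := by
  have hs : ({(X 0 : MvPolynomial (Fin 2) k) ^ p, (X 1 : MvPolynomial (Fin 2) k) ^ p} : Set _)
      = Set.image (fun s => monomial s (1 : k))
        {Finsupp.single (0 : Fin 2) p, Finsupp.single (1 : Fin 2) p} := by
    simp [Set.image_pair, X_pow_eq_monomial]
  have hm : (X 0 : MvPolynomial (Fin 2) k) ^ (p - 1) * X 1 =
      monomial (Finsupp.single (0 : Fin 2) (p - 1) + Finsupp.single (1 : Fin 2) 1) (1 : k) := by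
    rw [X_pow_eq_monomial, X, monomial_mul, one_mul]
  rw [hs, hm, mem_ideal_span_monomial_image]
  intro h
  obtain ⟨s, hs, hle⟩ := h (Finsupp.single (0 : Fin 2) (p - 1) + Finsupp.single (1 : Fin 2) 1)
    (by simp [mem_support_iff])
  rcases hs with rfl | rfl
  · have := hle 0
    simp at this
    omega
  · have := hle 1
    simp at this
    omega

set_option synthInstance.maxHeartbeats 1000000 in
/-- Let `k` be a field of characteristic `p > 0` and let
`A = k[x, y]/(x^p, y^p)`.  Then for every linear form `l` of `A`, the multiplication map
`l^p : A_0 → A_p` is neither injective nor surjective; in particular `A` does not have the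
strong Lefschetz property. -/
theorem statement17 {k : Type} [Field k] (p : ℕ) (hp : p ≠ 0) [CharP k p] :
    (∀ l ∈ quotGr (Ideal.span {(X 0 : MvPolynomial (Fin 2) k) ^ p,
        (X 1 : MvPolynomial (Fin 2) k) ^ p}) 1,
      (¬ ∀ x ∈ quotGr (Ideal.span {(X 0 : MvPolynomial (Fin 2) k) ^ p,
          (X 1 : MvPolynomial (Fin 2) k) ^ p}) 0, l ^ p * x = 0 → x = 0) ∧
      (¬ ∀ z ∈ quotGr (Ideal.span {(X 0 : MvPolynomial (Fin 2) k) ^ p,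
          (X 1 : MvPolynomial (Fin 2) k) ^ p}) p,
        ∃ x ∈ quotGr (Ideal.span {(X 0 : MvPolynomial (Fin 2) k) ^ p,
          (X 1 : MvPolynomial (Fin 2) k) ^ p}) 0, l ^ p * x = z)) ∧
    ¬ ∃ l ∈ quotGr (Ideal.span {(X 0 : MvPolynomial (Fin 2) k) ^ p,
        (X 1 : MvPolynomial (Fin 2) k) ^ p}) 1,
      IsSLAction (quotGr (Ideal.span {(X 0 : MvPolynomial (Fin 2) k) ^ p,
        (X 1 : MvPolynomial (Fin 2) k) ^ p})) l := by
  have hprime : p.Prime := (CharP.char_is_prime_or_zero k p).resolve_right hp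
  have : Fact p.Prime := ⟨hprime⟩
  have hnm := aux_not_mem (k := k) p hprime.two_le
  have hpow := aux_pow_mem (k := k) p
  generalize hI : Ideal.span {(X 0 : MvPolynomial (Fin 2) k) ^ p,
        (X 1 : MvPolynomial (Fin 2) k) ^ p} = I at *
  have hl : ∀ l ∈ quotGr I 1, l ^ p = 0 := by
    rintro _ ⟨f, hf, rfl⟩
    have := hpow f hf
    change (Ideal.Quotient.mk I f) ^ p = 0
    rw [← map_pow]
    exact Ideal.Quotient.eq_zero_iff_mem.2 this
  have h1 : (1 : MvPolynomial (Fin 2) k ⧸ I) ∈ quotGr I 0 :=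
    ⟨1, isHomogeneous_one _ _, map_one (Ideal.Quotient.mk I)⟩
  have h1ne : (1 : MvPolynomial (Fin 2) k ⧸ I) ≠ 0 := by
    intro h
    apply hnm
    have : (1 : MvPolynomial (Fin 2) k) ∈ I := Ideal.Quotient.eq_zero_iff_mem.1 h
    rw [(Ideal.eq_top_iff_one I).2 this]
    trivial
  have hw : Ideal.Quotient.mk I (X 0 ^ (p - 1) * X 1) ∈ quotGr I p := by
    refine ⟨X 0 ^ (p - 1) * X 1, ?_, rfl⟩
    have := ((isHomogeneous_X k (0 : Fin 2)).pow (p - 1)).mul (isHomogeneous_X k (1 : Fin 2))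
    rwa [one_mul, Nat.sub_add_cancel hprime.one_le] at this
  have hwne : Ideal.Quotient.mk I (X 0 ^ (p - 1) * X 1) ≠ 0 :=
    fun h => hnm (Ideal.Quotient.eq_zero_iff_mem.1 h)
  have main : ∀ l ∈ quotGr I 1, (¬ ∀ x ∈ quotGr I 0, l ^ p * x = 0 → x = 0) ∧
      (¬ ∀ z ∈ quotGr I p, ∃ x ∈ quotGr I 0, l ^ p * x = z) := by
    intro l hl1
    rw [hl l hl1]
    refine ⟨fun h => h1ne (h 1 h1 (zero_mul _)), fun h => ?_⟩
    obtain ⟨x, -, hx⟩ := h _ hw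
    exact hwne (by rw [← hx, zero_mul])
  refine ⟨main, ?_⟩
  rintro ⟨l, hl1, hsl⟩
  rcases hsl p 0 with h | h
  · exact (main l hl1).1 h
  · rw [zero_add] at h
    exact (main l hl1).2 h
end

section
/- Let k be a field of characteristic p with p > a + b − 2, where a, b ≥ 1, and let M = k[x,y]/(x^a, y^b). Then M has the strong Lefschetz property. -/
open MvPolynomial TensorProduct

/-- Commutation formula `D L^n = L^n D + n (s - 2 d - n + 1) L^(n-1)` on degree `d`. -/
lemma sl_comm {k T : Type*} [Field k] [AddCommGroup T] [Module k T]
    (gr : ℕ → Submodule k T) (L D : T →ₗ[k] T) (s : ℕ)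
    (hL : ∀ d, ∀ x ∈ gr d, L x ∈ gr (d + 1))
    (hc : ∀ d, ∀ x ∈ gr d, D (L x) - L (D x) = ((s : k) - 2 * d) • x) (n : ℕ) :
    ∀ d, ∀ x ∈ gr d, D ((L ^ (n + 1)) x) =
      (L ^ (n + 1)) (D x) + (((n : k) + 1) * (s - 2 * d - n)) • (L ^ n) x := by
  induction n with
  | zero =>
    intro d x hx
    have := hc d x hx
    simp only [zero_add, pow_one, pow_zero, Module.End.one_apply, Nat.cast_zero]
    rw [sub_eq_iff_eq_add] at this
    rw [this, add_comm]; simp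
  | succ n ih =>
    intro d x hx
    have h1 := ih (d + 1) (L x) (hL d x hx)
    have h2 := hc d x hx
    rw [sub_eq_iff_eq_add] at h2
    have e3 : (L ^ (n + 1 + 1)) x = (L ^ (n + 1)) (L x) := by
      rw [pow_succ, Module.End.mul_apply]
    rw [e3, h1, h2, map_add, map_smul]
    have e2 : (L ^ (n + 1 + 1)) (D x) = (L ^ (n + 1)) (L (D x)) := by
      rw [pow_succ, Module.End.mul_apply]
    have e : (L ^ n) (L x) = (L ^ (n + 1)) x := by rw [pow_succ, Module.End.mul_apply]
    rw [e, e2]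
    push_cast
    module

lemma sl_pow_mem {k T : Type*} [Field k] [AddCommGroup T] [Module k T]
    (gr : ℕ → Submodule k T) (L : T →ₗ[k] T)
    (hL : ∀ d, ∀ x ∈ gr d, L x ∈ gr (d + 1)) (n d : ℕ) (x : T) (hx : x ∈ gr d) :
    (L ^ n) x ∈ gr (d + n) := by
  induction n with
  | zero => simpa using hx
  | succ n ih =>
    rw [pow_succ', Module.End.mul_apply]
    exact hL _ _ ih

lemma cast_ne {k : Type*} [Field k] (p : ℕ) [CharP k p] (n s : ℕ) (h : s < p) (h1 : 1 ≤ n)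
    (h2 : n ≤ s) : (n : k) ≠ 0 := by
  intro h0
  rw [CharP.cast_eq_zero_iff k p] at h0
  have := Nat.le_of_dvd (by omega) h0
  omega

lemma sl_inj {k T : Type*} [Field k] [AddCommGroup T] [Module k T]
    (gr : ℕ → Submodule k T) (L D : T →ₗ[k] T) (s : ℕ) (p : ℕ) [CharP k p] (hp : s < p)
    (hL : ∀ d, ∀ x ∈ gr d, L x ∈ gr (d + 1))
    (hD : ∀ d, ∀ x ∈ gr (d + 1), D x ∈ gr d) (hD0 : ∀ x ∈ gr 0, D x = 0)
    (hc : ∀ d, ∀ x ∈ gr d, D (L x) - L (D x) = ((s : k) - 2 * d) • x) :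
    ∀ d n : ℕ, n + 2 * d ≤ s → ∀ x ∈ gr d, (L ^ n) x = 0 → x = 0 := by
  intro d
  induction d with
  | zero =>
    intro n
    induction n with
    | zero => intro _ x _ h; simpa using h
    | succ n ihn =>
      intro hn x hx h
      have h1 := sl_comm gr L D s hL hc n 0 x hx
      rw [h, hD0 x hx] at h1
      simp only [map_zero, zero_add] at h1
      have h2 := smul_eq_zero.1 h1.symm
      rcases h2 with h2 | h2
      · exfalso
        have e : ((n : k) + 1) * (s - 2 * ((0 : ℕ) : k) - n) = ((n + 1 : ℕ) : k) * ((s - n : ℕ) : k) := by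
          rw [Nat.cast_sub (by omega)]; push_cast; ring
        rw [e] at h2
        exact mul_ne_zero (cast_ne p _ s hp (by omega) (by omega))
          (cast_ne p _ s hp (by omega) (by omega)) h2
      · exact ihn (by omega) x hx h2
  | succ d ihd =>
    intro n
    induction n with
    | zero => intro _ x _ h; simpa using h
    | succ n ihn =>
      intro hn x hx h
      have h1 := sl_comm gr L D s hL hc n (d + 1) x hx
      rw [h, map_zero, pow_succ, Module.End.mul_apply, ← map_smul, ← map_add] at h1
      have h3 := ihn (by omega) _ (Submodule.add_mem _ (hL _ _ (hD _ _ hx))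
        (Submodule.smul_mem _ _ hx)) h1.symm
      have h4 : (L ^ (n + 2)) (D x) = 0 := by
        have : L (D x) = - ((((n : k) + 1) * (s - 2 * ((d + 1 : ℕ) : k) - n)) • x) :=
          eq_neg_of_add_eq_zero_left h3
        rw [pow_succ, Module.End.mul_apply, this, map_neg, map_smul, h]; simp
      have h5 := ihd (n + 2) (by omega) _ (hD _ _ hx) h4
      rw [h5, map_zero, zero_add] at h3
      rcases smul_eq_zero.1 h3 with h2 | h2
      · exfalso
        have e : ((n : k) + 1) * (s - 2 * ((d + 1 : ℕ) : k) - n)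
            = ((n + 1 : ℕ) : k) * ((s - (2 * (d + 1) + n) : ℕ) : k) := by
          rw [Nat.cast_sub (by omega)]; push_cast; ring
        rw [e] at h2
        exact mul_ne_zero (cast_ne p _ s hp (by omega) (by omega))
          (cast_ne p _ s hp (by omega) (by omega)) h2
      · exact h2

lemma sl_surj {k T : Type*} [Field k] [AddCommGroup T] [Module k T]
    (gr : ℕ → Submodule k T) (L D : T →ₗ[k] T) (s : ℕ) (p : ℕ) [CharP k p] (hp : s < p)
    (hL : ∀ d, ∀ x ∈ gr d, L x ∈ gr (d + 1))
    (hD : ∀ d, ∀ x ∈ gr (d + 1), D x ∈ gr d) (hD0 : ∀ x ∈ gr 0, D x = 0)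
    (hc : ∀ d, ∀ x ∈ gr d, D (L x) - L (D x) = ((s : k) - 2 * d) • x)
    (hs : ∀ d, s < d → ∀ x ∈ gr d, x = 0) :
    ∀ m n d : ℕ, s + 1 ≤ m + (d + n) → s ≤ n + 2 * d →
      ∀ w ∈ gr (d + n), ∃ x ∈ gr d, (L ^ n) x = w := by
  intro m
  induction m with
  | zero =>
    intro n d h _ w hw
    exact ⟨0, Submodule.zero_mem _, by rw [map_zero, hs _ (by omega) w hw]⟩
  | succ m ihm =>
    intro n
    induction n with
    | zero => intro d _ _ w hw; exact ⟨w, hw, by simp⟩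
    | succ n ihn =>
      intro d h1 h2 w hw
      by_cases hds : s < d + (n + 1)
      · exact ⟨0, Submodule.zero_mem _, by rw [map_zero, hs _ hds w hw]⟩
      obtain ⟨u, hu, huw⟩ := ihn (d + 1) (by omega) (by omega) w
        (by rw [show d + 1 + n = d + (n + 1) by omega]; exact hw)
      obtain ⟨t, ht, htw⟩ := ihm (n + 2) d (by omega) (by omega) (L w)
        (by rw [show d + (n + 2) = d + (n + 1) + 1 by omega]; exact hL _ _ hw)
      have c1 := sl_comm gr L D s hL hc n (d + 1) u hu
      have c2 := sl_comm gr L D s hL hc (n + 1) d t ht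
      have hLu : (L ^ (n + 1)) u = L w := by
        rw [pow_succ', Module.End.mul_apply, huw]
      have hDt : L (D t) ∈ gr d := by
        rcases d with _ | d
        · rw [hD0 t ht, map_zero]; exact Submodule.zero_mem _
        · exact hL _ _ (hD _ _ ht)
      rw [htw, pow_succ, Module.End.mul_apply, ← map_smul, ← map_add] at c2
      rw [hLu, c2, huw] at c1
      have e : ((n : k) + 1) * (s - 2 * ((d + 1 : ℕ) : k) - n)
            = - (((n + 1 : ℕ) : k) * ((2 * (d + 1) + n - s : ℕ) : k)) := by
        rw [Nat.cast_sub (by omega)]; push_cast; ring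
      have hne : ((n : k) + 1) * (s - 2 * ((d + 1 : ℕ) : k) - n) ≠ 0 := by
        rw [e]
        exact neg_ne_zero.2 (mul_ne_zero (cast_ne p _ s hp (by omega) (by omega))
          (cast_ne p _ s hp (by omega) (by omega)))
      have c3 := (sub_eq_iff_eq_add'.2 c1)
      rw [← map_sub] at c3
      refine ⟨_, Submodule.smul_mem _ (((n : k) + 1) * (s - 2 * ((d + 1 : ℕ) : k) - n))⁻¹
        (Submodule.sub_mem _ (Submodule.add_mem _ hDt (Submodule.smul_mem _
          (((n + 1 : ℕ) + 1 : k) * (s - 2 * d - (n + 1 : ℕ))) ht)) (hD _ _ hu)),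
        ?_⟩
      rw [map_smul, c3, smul_smul, inv_mul_cancel₀ hne, one_smul]

/-- One-variable lowering operator `(a-1) ∂ - x ∂²`, with `c = a - 1`. -/
noncomputable def lowOp {k : Type*} [Field k] (i : Fin 2) (c : ℕ) :
    MvPolynomial (Fin 2) k →ₗ[k] MvPolynomial (Fin 2) k :=
  (c : k) • (pderiv i).toLinearMap -
    (LinearMap.mulLeft k (X i)) ∘ₗ (pderiv i).toLinearMap ∘ₗ (pderiv i).toLinearMap

lemma lowOp_apply {k : Type*} [Field k] (i : Fin 2) (c : ℕ) (f : MvPolynomial (Fin 2) k) :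
    lowOp i c f = (c : MvPolynomial (Fin 2) k) * pderiv i f - X i * pderiv i (pderiv i f) := by
  simp [lowOp, MvPolynomial.smul_eq_C_mul]

lemma lowOp_comm_same {k : Type*} [Field k] (i : Fin 2) (c : ℕ) (f : MvPolynomial (Fin 2) k) :
    lowOp i c (X i * f) - X i * lowOp i c f = (c : MvPolynomial (Fin 2) k) * f
      - 2 * (X i * pderiv i f) := by
  simp only [lowOp_apply, Derivation.leibniz, pderiv_X_self, map_add, smul_eq_mul,
    Derivation.map_one_eq_zero]
  ring

lemma lowOp_comm_diff {k : Type*} [Field k] (i j : Fin 2) (h : j ≠ i) (c : ℕ)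
    (g f : MvPolynomial (Fin 2) k) (hg : pderiv i g = 0) :
    lowOp i c (g * f) = g * lowOp i c f := by
  simp only [lowOp_apply, Derivation.leibniz, hg, map_add, smul_eq_mul, map_zero]
  ring

lemma lowOp_pow {k : Type*} [Field k] (i : Fin 2) (c : ℕ)
    (f : MvPolynomial (Fin 2) k) :
    ∃ g, lowOp i c (X i ^ (c + 1) * f) = X i ^ (c + 1) * g := by
  refine ⟨(c : MvPolynomial (Fin 2) k) * pderiv i f - 2 * ((c : MvPolynomial (Fin 2) k) + 1) * pderiv i f
    - X i * pderiv i (pderiv i f), ?_⟩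
  simp only [lowOp_apply, Derivation.leibniz, Derivation.leibniz_pow, pderiv_X_self, map_add,
    smul_eq_mul, nsmul_eq_mul, Derivation.map_natCast, Nat.add_sub_cancel, mul_one]
  rcases c with _ | c
  · simp; ring
  · simp only [Nat.add_sub_cancel]; push_cast; ring

lemma lowOp_mem {k : Type*} [Field k] (i : Fin 2) (c d : ℕ)
    (f : MvPolynomial (Fin 2) k) (hf : f.IsHomogeneous (d + 1)) :
    (lowOp i c f).IsHomogeneous d := by
  have h1 : (pderiv i f).IsHomogeneous d := hf.pderiv
  rw [lowOp_apply]
  refine IsHomogeneous.sub ?_ ?_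
  · have := (isHomogeneous_C (Fin 2) (c : k)).mul h1
    simpa using this
  · rcases d with _ | d
    · rw [← totalDegree_zero_iff_isHomogeneous, totalDegree_eq_zero_iff_eq_C] at h1
      rw [h1, pderiv_C, mul_zero]
      exact isHomogeneous_zero _ _ _
    · have h2 : (pderiv i (pderiv i f)).IsHomogeneous d := h1.pderiv
      have := (isHomogeneous_X k i).mul h2
      rwa [add_comm] at this

lemma lowOp_zero {k : Type*} [Field k] (i : Fin 2) (c : ℕ)
    (f : MvPolynomial (Fin 2) k) (hf : f.IsHomogeneous 0) :
    lowOp i c f = 0 := by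
  rw [← totalDegree_zero_iff_isHomogeneous, totalDegree_eq_zero_iff_eq_C] at hf
  rw [lowOp_apply, hf]; simp

lemma mem_of_large {k : Type*} [Field k] (a b d : ℕ) (h : a + b < d + 2) (ha : 1 ≤ a) (hb : 1 ≤ b)
    (f : MvPolynomial (Fin 2) k) (hf : f.IsHomogeneous d) :
    f ∈ (Ideal.span {(X 0 : MvPolynomial (Fin 2) k) ^ a,
          (X 1 : MvPolynomial (Fin 2) k) ^ b}) := by
  rw [f.as_sum]
  refine Ideal.sum_mem _ fun m hm => ?_
  have hd : m 0 + m 1 = d := by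
    have := hf (mem_support_iff.1 hm)
    simpa [Finsupp.weight_apply, Finsupp.sum_fintype] using this
  have hmon : monomial m (coeff m f) = C (coeff m f) * (X 0 ^ m 0 * X 1 ^ m 1) := by
    rw [monomial_eq, Finsupp.prod_fintype _ _ (by simp)]; simp
  rw [hmon]
  refine Ideal.mul_mem_left _ _ ?_
  by_cases h0 : a ≤ m 0
  · exact Ideal.mul_mem_right _ _ (Ideal.pow_mem_of_pow_mem _ (Ideal.subset_span (by simp)) h0)
  · exact Ideal.mul_mem_left _ _ (Ideal.pow_mem_of_pow_mem _
      (Ideal.subset_span (by simp)) (show b ≤ m 1 by omega))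

/-- Let `k` be a field of characteristic `p` with `p > a + b - 2`, where
`a, b ≥ 1`, and let `M = k[x, y]/(x^a, y^b)`.  Then `M` has the strong Lefschetz property. -/
theorem statement18 {k : Type} [Field k] (p : ℕ) (hp0 : p ≠ 0) [CharP k p]
    (a b : ℕ) (ha : 1 ≤ a) (hb : 1 ≤ b) (hp : a + b - 2 < p) :
    ∃ l : MvPolynomial (Fin 2) k, l ∈ homogeneousSubmodule (Fin 2) k 1 ∧
      IsSLAction
        (quotGr (Ideal.span {(X 0 : MvPolynomial (Fin 2) k) ^ a,
          (X 1 : MvPolynomial (Fin 2) k) ^ b}))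
        l := by
  have hl : (X 0 + X 1 : MvPolynomial (Fin 2) k) ∈ homogeneousSubmodule (Fin 2) k 1 :=
    (isHomogeneous_X k 0).add (isHomogeneous_X k 1)
  refine ⟨X 0 + X 1, hl, ?_⟩
  obtain ⟨a, rfl⟩ : ∃ a', a = a' + 1 := ⟨a - 1, by omega⟩
  obtain ⟨b, rfl⟩ : ∃ b', b = b' + 1 := ⟨b - 1, by omega⟩
  have hp' : a + b < p := by omega
  set I : Ideal (MvPolynomial (Fin 2) k) := Ideal.span {(X 0 : MvPolynomial (Fin 2) k) ^ (a + 1),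
          (X 1 : MvPolynomial (Fin 2) k) ^ (b + 1)} with hI
  set π : MvPolynomial (Fin 2) k →ₗ[k] (MvPolynomial (Fin 2) k ⧸ I) :=
    (Ideal.Quotient.mkₐ k I).toLinearMap with hπ
  have hπm : ∀ f g, π (f * g) = π f * π g := fun f g => map_mul (Ideal.Quotient.mkₐ k I) f g
  have hπ0 : ∀ f, π f = 0 ↔ f ∈ I := fun f => Ideal.Quotient.eq_zero_iff_mem
  have hsurj : Function.Surjective π := Ideal.Quotient.mk_surjective
  obtain ⟨g, hg⟩ := LinearMap.exists_rightInverse_of_surjective π (LinearMap.range_eq_top.2 hsurj)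
  have hg' : ∀ x, π (g x) = x := fun x => LinearMap.congr_fun hg x
  let D0 : MvPolynomial (Fin 2) k →ₗ[k] MvPolynomial (Fin 2) k := lowOp 0 a + lowOp 1 b
  have hD0 : ∀ f, D0 f = lowOp 0 a f + lowOp 1 b f := fun f => rfl
  have hX0 : (X 0 : MvPolynomial (Fin 2) k) ^ (a + 1) ∈ I := Ideal.subset_span (by simp)
  have hX1 : (X 1 : MvPolynomial (Fin 2) k) ^ (b + 1) ∈ I := Ideal.subset_span (by simp)
  have hDI : ∀ f ∈ I, D0 f ∈ I := by
    intro f hf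
    obtain ⟨u, v, rfl⟩ := Ideal.mem_span_pair.1 hf
    rw [map_add, hD0, hD0, mul_comm u, mul_comm v]
    obtain ⟨u', hu'⟩ := lowOp_pow (k := k) 0 a u
    obtain ⟨v', hv'⟩ := lowOp_pow (k := k) 1 b v
    rw [hu', hv', lowOp_comm_diff 1 0 (by decide) b (X 0 ^ (a + 1)) u
      (by simp [Derivation.leibniz_pow, pderiv_X]),
      lowOp_comm_diff 0 1 (by decide) a (X 1 ^ (b + 1)) v
      (by simp [Derivation.leibniz_pow, pderiv_X])]
    exact I.add_mem (I.add_mem (I.mul_mem_right _ hX0) (I.mul_mem_right _ hX0))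
      (I.add_mem (I.mul_mem_right _ hX1) (I.mul_mem_right _ hX1))
  let D : (MvPolynomial (Fin 2) k ⧸ I) →ₗ[k] (MvPolynomial (Fin 2) k ⧸ I) := π ∘ₗ D0 ∘ₗ g
  have hD : ∀ f, D (π f) = π (D0 f) := by
    intro f
    change π (D0 (g (π f))) = π (D0 f)
    rw [← sub_eq_zero, ← map_sub, ← map_sub, hπ0]
    apply hDI
    rw [← hπ0, map_sub, hg', sub_self]
  let L : (MvPolynomial (Fin 2) k ⧸ I) →ₗ[k] (MvPolynomial (Fin 2) k ⧸ I) :=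
    LinearMap.mulLeft k (π (X 0 + X 1))
  have hL : ∀ f, L (π f) = π ((X 0 + X 1) * f) := fun f => (hπm _ f).symm
  have hLn : ∀ n x, (L ^ n) x = (X 0 + X 1 : MvPolynomial (Fin 2) k) ^ n • x := by
    intro n x
    obtain ⟨f, rfl⟩ := hsurj x
    have : (L ^ n) (π f) = π ((X 0 + X 1) ^ n * f) := by
      induction n with
      | zero => simp
      | succ n ih => rw [pow_succ', Module.End.mul_apply, ih, hL, pow_succ', mul_assoc]
    rw [this]
    rfl
  have gL : ∀ d, ∀ x ∈ quotGr I d, L x ∈ quotGr I (d + 1) := by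
    rintro d _ ⟨f, hf, rfl⟩
    refine ⟨(X 0 + X 1) * f, ?_, (hL f).symm⟩
    rw [add_comm d 1]
    exact IsHomogeneous.mul hl hf
  have gD : ∀ d, ∀ x ∈ quotGr I (d + 1), D x ∈ quotGr I d := by
    rintro d _ ⟨f, hf, rfl⟩
    exact ⟨D0 f, (lowOp_mem 0 a d f hf).add (lowOp_mem 1 b d f hf), (hD f).symm⟩
  have gD0 : ∀ x ∈ quotGr I 0, D x = 0 := by
    rintro _ ⟨f, hf, rfl⟩
    refine (hD f).trans ?_
    rw [hD0, lowOp_zero 0 a f hf, lowOp_zero 1 b f hf, add_zero, map_zero]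
  have gC : ∀ d, ∀ x ∈ quotGr I d, D (L x) - L (D x) = (((a + b : ℕ) : k) - 2 * d) • x := by
    rintro d _ ⟨f, hf, rfl⟩
    change D (L (π f)) - L (D (π f)) = _ • π f
    rw [hL, hD, hD, hL, ← map_sub, ← map_smul]
    congr 1
    have e := IsHomogeneous.sum_X_mul_pderiv hf
    rw [Fin.sum_univ_two, nsmul_eq_mul] at e
    have e0 := lowOp_comm_same 0 a f
    have e1 := lowOp_comm_same 1 b f
    have e2 := lowOp_comm_diff 1 0 (by decide) b (X 0) f (by simp [pderiv_X])
    have e3 := lowOp_comm_diff 0 1 (by decide) a (X 1) f (by simp [pderiv_X])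
    rw [hD0, hD0, add_mul, map_add, map_add, e2, e3, MvPolynomial.smul_eq_C_mul]
    simp only [map_sub, map_mul, map_natCast, map_ofNat]
    push_cast
    linear_combination e0 + e1 - 2 * e
  have gS : ∀ d, a + b < d → ∀ x ∈ quotGr I d, x = 0 := by
    rintro d hd _ ⟨f, hf, rfl⟩
    exact (hπ0 f).2 (mem_of_large (a + 1) (b + 1) d (by omega) ha hb f hf)
  intro n d
  rcases le_total (n + 2 * d) (a + b) with h | h
  · left
    intro x hx hx0
    exact sl_inj (quotGr I) L D (a + b) p hp' gL gD gD0 gC d n h x hx (by rw [hLn]; exact hx0)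
  · right
    intro w hw
    obtain ⟨x, hx, hxw⟩ := sl_surj (quotGr I) L D (a + b) p hp' gL gD gD0 gC gS (a + b + 1) n d
      (by omega) h w hw
    exact ⟨x, hx, by rw [← hLn]; exact hxw⟩
end

section
/- Let M and N be Artinian (finite length) graded R = k[x_1,…,x_n]-modules with the strong Lefschetz property, where k has characteristic p > s + t with s the socle degree of M and t the socle degree of N. Let l ∈ R_1 and y ∈ R_1 be strong Lefschetz elements for M and N respectively. If the Hilbert function of M is symmetric and the decomposition of N as a graded k[y]-module is almost centered, then M ⊗_k N has the strong Lefschetz property. -/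
open MvPolynomial TensorProduct

section SL
variable {k W : Type*} [Field k] [AddCommGroup W] [Module k W]

lemma sl2_comm (X Y : Module.End k W) (V : ℤ → Submodule k W) (c : ℕ)
    (hX : ∀ d, ∀ v ∈ V d, X v ∈ V (d + 1))
    (hH : ∀ d, ∀ v ∈ V d, X (Y v) - Y (X v) = (((2 * d - c : ℤ)) : k) • v) (d : ℤ) (v : W)
    (hv : v ∈ V d) (a : ℕ) : (X ^ a) v ∈ V (d + a) ∧
      (X ^ (a + 1)) (Y v) = Y ((X ^ (a + 1)) v) +
        (((a + 1) * (2 * d - c + a) : ℤ) : k) • (X ^ a) v := by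
  induction a with
  | zero =>
    refine ⟨by simpa using hv, ?_⟩
    have := hH d v hv
    simp only [zero_add, pow_one, pow_zero, Module.End.one_apply]
    rw [sub_eq_iff_eq_add] at this
    rw [this, add_comm]; congr 3; push_cast; ring
  | succ a ih =>
    have h1 : (X ^ (a + 1)) v ∈ V (d + (a + 1 : ℕ)) := by
      rw [pow_succ']
      have := hX _ _ ih.1
      push_cast; rw [← add_assoc]; exact this
    refine ⟨h1, ?_⟩
    rw [pow_succ', Module.End.mul_apply, ih.2, map_add, map_smul, Module.End.mul_apply]
    have := hH _ _ h1
    rw [sub_eq_iff_eq_add] at this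
    rw [this, ← Module.End.mul_apply X (X ^ a), ← pow_succ', add_comm (_ • _) (Y _), add_assoc, ← add_smul]
    congr 2; push_cast; ring

lemma sl2_inj (X Y : Module.End k W) (V : ℤ → Submodule k W) (c p : ℕ) [CharP k p] (hc : c < p)
    (hX : ∀ d, ∀ v ∈ V d, X v ∈ V (d + 1)) (hY : ∀ d, ∀ v ∈ V d, Y v ∈ V (d - 1))
    (hH : ∀ d, ∀ v ∈ V d, X (Y v) - Y (X v) = (((2 * d - c : ℤ)) : k) • v)
    (hneg : ∀ d < 0, V d = ⊥) (n : ℕ) :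
    ∀ d : ℤ, d < n → ∀ a : ℕ, 2 * d + a ≤ c → ∀ v ∈ V d, (X ^ a) v = 0 → v = 0 := by
  induction n with
  | zero =>
    intro d hd a _ v hv _
    rw [hneg d (by simpa using hd)] at hv
    simpa using hv
  | succ n ihn =>
    intro d hd a
    induction a with
    | zero => intro _ v _ h; simpa using h
    | succ a iha =>
      intro hda v hv h
      by_cases hd0 : d < 0
      · rw [hneg d hd0] at hv
        simpa using hv
      have hcm := (sl2_comm X Y V c hX hH d v hv a).2
      have hYv : Y v = 0 := by
        refine ihn (d - 1) (by push_cast at hd; linarith) (a + 2) (by push_cast at hda ⊢; linarith) _ (hY d v hv) ?_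
        rw [pow_succ', Module.End.mul_apply, hcm, h, map_zero, zero_add, map_smul,
          ← Module.End.mul_apply, ← pow_succ', h, smul_zero]
      rw [hYv, h, map_zero, map_zero, zero_add] at hcm
      have hcm := (smul_eq_zero.1 hcm.symm)
      refine iha (by push_cast at hda; linarith) v hv (hcm.resolve_left ?_)
      push_cast at hda
      obtain ⟨m, hm⟩ : ∃ m : ℕ, (m : ℤ) = -(2 * d - c + a) := ⟨(-(2 * d - c + a)).toNat, by omega⟩
      have e : (((a + 1) * (2 * d - c + a) : ℤ) : k) = - (((a + 1 : ℕ) : k) * (m : k)) := by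
        have : ((a + 1) * (2 * d - c + a) : ℤ) = -(((a + 1 : ℕ) : ℤ) * (m : ℤ)) := by
          rw [hm]; push_cast; ring
        rw [this]; push_cast; rfl
      rw [e, neg_eq_zero]
      refine mul_ne_zero ?_ ?_
      · rw [Ne, CharP.cast_eq_zero_iff k p]
        intro hdv; have := Nat.le_of_dvd (by omega) hdv; omega
      · rw [Ne, CharP.cast_eq_zero_iff k p]
        intro hdv; have := Nat.le_of_dvd (by omega) hdv; omega

lemma pow_mem_gr (Y : Module.End k W) (V : ℤ → Submodule k W) (ε : ℤ)
    (hY : ∀ d, ∀ v ∈ V d, Y v ∈ V (d + ε)) (a : ℕ) : ∀ d, ∀ v ∈ V d, (Y ^ a) v ∈ V (d + a * ε) := by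
  induction a with
  | zero => intro d v hv; simpa using hv
  | succ a ih =>
    intro d v hv
    rw [pow_succ', Module.End.mul_apply]
    have := hY _ _ (ih d v hv)
    convert this using 2
    push_cast; ring

lemma sl2_surj [FiniteDimensional k W] (X Y : Module.End k W) (V : ℤ → Submodule k W)
    (c p : ℕ) [CharP k p] (hc : c < p)
    (hX : ∀ d, ∀ v ∈ V d, X v ∈ V (d + 1)) (hY : ∀ d, ∀ v ∈ V d, Y v ∈ V (d - 1))
    (hH : ∀ d, ∀ v ∈ V d, X (Y v) - Y (X v) = (((2 * d - c : ℤ)) : k) • v)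
    (hneg : ∀ d < 0, V d = ⊥) (hbig : ∀ d > (c : ℤ), V d = ⊥) (d : ℤ) (a : ℕ)
    (hda : c ≤ 2 * d + a) (w : W) (hw : w ∈ V (d + a)) : ∃ x ∈ V d, (X ^ a) x = w := by
  obtain ⟨b, hb⟩ : ∃ b : ℕ, (b : ℤ) = 2 * d + a - c := ⟨(2 * d + a - c).toNat, by omega⟩
  -- `X ^ (a+b) Y ^ (a+b)` is injective on `V (d+a)`
  have hXm := pow_mem_gr X V 1 hX
  have hYm := pow_mem_gr Y V (-1) hY
  have hinjX : ∀ v ∈ V (d - b), (X ^ (a + b)) v = 0 → v = 0 := by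
    intro v hv
    refine sl2_inj X Y V c p hc hX hY hH hneg ((d - b).toNat + 1) (d - b) (by omega) (a + b) ?_ v hv
    push_cast; omega
  have hinjY : ∀ v ∈ V (d + a), (Y ^ (a + b)) v = 0 → v = 0 := by
    intro v hv
    refine sl2_inj Y X (fun e => V (c - e)) c p hc ?_ ?_ ?_ ?_ ((c - (d + a)).toNat + 1)
      (c - (d + a)) (by omega) (a + b) (by push_cast; omega) v (by simpa using hv)
    · intro e v hv
      have := hY _ v hv
      convert this using 2; ring
    · intro e v hv
      have := hX _ v hv
      convert this using 2; ring
    · intro e v hv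
      have := hH _ v hv
      rw [← neg_sub, this, ← neg_smul]
      congr 1; push_cast; ring
    · intro e he
      exact hbig _ (by omega)
  have hmY : ∀ v ∈ V (d + a), (Y ^ (a + b)) v ∈ V (d - b) := by
    intro v hv
    have := hYm (a + b) _ v hv
    convert this using 2; push_cast; ring
  have hmX : ∀ v ∈ V (d - b), (X ^ (a + b)) v ∈ V (d + a) := by
    intro v hv
    have := hXm (a + b) _ v hv
    convert this using 2; push_cast; ring
  let T : V (d + a) →ₗ[k] V (d + a) :=
    ((X ^ (a + b)) * (Y ^ (a + b)) : Module.End k W).restrict (fun v hv => hmX _ (hmY v hv))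
  have hT : Function.Injective T := by
    rw [← LinearMap.ker_eq_bot, LinearMap.ker_eq_bot']
    intro v hv
    have : (X ^ (a + b)) ((Y ^ (a + b)) (v : W)) = 0 := congrArg Subtype.val hv
    exact Subtype.ext (hinjY _ v.2 (hinjX _ (hmY _ v.2) this))
  obtain ⟨u, hu⟩ := LinearMap.injective_iff_surjective.1 hT ⟨w, hw⟩
  refine ⟨(X ^ b) ((Y ^ (a + b)) (u : W)), ?_, ?_⟩
  · have := hXm b _ _ (hmY u u.2)
    convert this using 2; ring
  · rw [← Module.End.mul_apply, ← pow_add]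
    exact congrArg Subtype.val hu

/-- projections attached to an internal grading -/
lemma exists_proj_s19 (gr : ℕ → Submodule k W) (h : DirectSum.IsInternal gr) :
    ∃ π : ℕ → W →ₗ[k] W, (∀ d, ∀ x ∈ gr d, π d x = x) ∧
      ∀ d e, d ≠ e → ∀ x ∈ gr e, π d x = 0 := by
  let E := LinearEquiv.ofBijective (DirectSum.coeLinearMap gr) h
  have hE : ∀ e (x : gr e), E.symm (x : W) = DirectSum.lof k ℕ (fun i => gr i) e x := by
    intro e x
    rw [LinearEquiv.symm_apply_eq]
    change (x : W) = DirectSum.coeLinearMap gr _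
    rw [DirectSum.coeLinearMap_lof]
  refine ⟨fun d => (gr d).subtype ∘ₗ DirectSum.component k ℕ (fun i => gr i) d ∘ₗ E.symm.toLinearMap,
    ?_, ?_⟩
  · intro d x hx
    have := hE d ⟨x, hx⟩
    simp only [LinearMap.comp_apply, LinearEquiv.coe_coe] 
    rw [this, DirectSum.component.lof_self]; rfl
  · intro d e hde x hx
    have := hE e ⟨x, hx⟩
    simp only [LinearMap.comp_apply, LinearEquiv.coe_coe] 
    rw [this, DirectSum.component.of]
    simp [Ne.symm hde]

/-- the degree `d` piece is spanned by the basis elements of degree `d` -/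
lemma gr_le_span (gr : ℕ → Submodule k W) (h : DirectSum.IsInternal gr) {Q : Type*}
    (v : Q → W) (deg : Q → ℕ) (hv : ∀ q, v q ∈ gr (deg q))
    (hspan : Submodule.span k (Set.range v) = ⊤) (d : ℕ) :
    gr d ≤ Submodule.span k {x | ∃ q, deg q = d ∧ x = v q} := by
  obtain ⟨π, h1, h2⟩ := exists_proj_s19 gr h
  intro x hx
  have hx' : x ∈ Submodule.span k (Set.range v) := hspan ▸ Submodule.mem_top
  have key : Submodule.span k (Set.range v) ≤
      (Submodule.span k {x | ∃ q, deg q = d ∧ x = v q}).comap (π d) := by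
    rw [Submodule.span_le]
    rintro _ ⟨q, rfl⟩
    by_cases hq : deg q = d
    · subst hq
      simp only [Submodule.comap_coe, Set.mem_preimage, SetLike.mem_coe]
      rw [h1 _ _ (hv q)]
      exact Submodule.subset_span ⟨q, rfl, rfl⟩
    · simp only [Submodule.comap_coe, Set.mem_preimage, SetLike.mem_coe]
      rw [h2 _ _ (Ne.symm hq) _ (hv q)]
      exact Submodule.zero_mem _
  have := key hx'
  rw [Submodule.mem_comap, h1 d x hx] at this
  exact this

/-- the lowering operator attached to a string decomposition -/
lemma exists_lower (gr : ℕ → Submodule k W) (f : Module.End k W) {Λ : Type*} (iv dv : Λ → ℕ)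
    (e : Λ → W) (h : IsDecompEnd gr f iv dv e) :
    ∃ Y : Module.End k W, ∀ α j, j ≤ dv α →
      Y ((f ^ j) (e α)) = ((j * (dv α - j) : ℤ) : k) • (f ^ (j - 1)) (e α) := by
  obtain ⟨-, -, h0, hli, hsp⟩ := h
  let b := Module.Basis.mk hli hsp.ge
  refine ⟨b.constr k (fun q => ((q.2 * (dv q.1 - q.2) : ℤ) : k) • (f ^ ((q.2 : ℕ) - 1)) (e q.1)), ?_⟩
  intro α j hj
  rcases hj.lt_or_eq with hj | hj
  · have := b.constr_basis k (fun q => ((q.2 * (dv q.1 - q.2) : ℤ) : k) • (f ^ ((q.2 : ℕ) - 1)) (e q.1)) ⟨α, ⟨j, hj⟩⟩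
    simpa [b] using this
  · subst hj
    rw [h0]; simp

lemma exists_stringProj (gr : ℕ → Submodule k W) (f : Module.End k W) {Λ : Type*} [DecidableEq Λ]
    (iv dv : Λ → ℕ)
    (e : Λ → W) (h : IsDecompEnd gr f iv dv e) :
    ∃ π : Λ → Module.End k W, ∀ α β j, 
      π α ((f ^ j) (e β)) = if β = α then (f ^ j) (e β) else 0 := by
  obtain ⟨-, -, h0, hli, hsp⟩ := h
  let b := Module.Basis.mk hli hsp.ge
  refine ⟨fun α => b.constr k (fun q => if q.1 = α then (f ^ (q.2 : ℕ)) (e q.1) else 0), ?_⟩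
  intro α β j
  rcases lt_or_ge j (dv β) with hj | hj
  · have := b.constr_basis k (fun q => if q.1 = α then (f ^ (q.2 : ℕ)) (e q.1) else 0) ⟨β, ⟨j, hj⟩⟩
    simpa [b] using this
  · have : (f ^ j) (e β) = 0 := by
      obtain ⟨m, rfl⟩ := Nat.exists_eq_add_of_le' hj
      rw [pow_add, Module.End.mul_apply, h0, map_zero]
    rw [this]; simp

end SL
section Lef
universe u
variable {k : Type*} {W : Type u} [Field k] [AddCommGroup W] [Module k W]

lemma endpow_mem (gr : ℕ → Submodule k W) (f : Module.End k W)
    (hf : ∀ d, ∀ x ∈ gr d, f x ∈ gr (d + 1)) (a d : ℕ) (x : W) (hx : x ∈ gr d) :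
    (f ^ a) x ∈ gr (d + a) := by
  induction a with
  | zero => simpa using hx
  | succ a ih => rw [pow_succ', Module.End.mul_apply]; exact hf _ _ ih

lemma pow_zero_of_le (f : Module.End k W) (x : W) (a b : ℕ) (h : (f ^ a) x = 0) (hab : a ≤ b) :
    (f ^ b) x = 0 := by
  obtain ⟨m, rfl⟩ := Nat.exists_eq_add_of_le' hab
  rw [pow_add, Module.End.mul_apply, h, map_zero]

lemma exists_lefschetz_decomp (gr : ℕ → Submodule k W) (hint : DirectSum.IsInternal gr)
    (f : Module.End k W) (hf : ∀ d, ∀ x ∈ gr d, f x ∈ gr (d + 1)) (s : ℕ)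
    (hbig : ∀ d, s < d → gr d = ⊥)
    (hinj : ∀ d, 2 * d ≤ s → ∀ x ∈ gr d, (f ^ (s - 2 * d)) x = 0 → x = 0)
    (hsurj : ∀ d, 2 * d ≤ s → ∀ w ∈ gr (s - d), ∃ x ∈ gr d, (f ^ (s - 2 * d)) x = w) :
    ∃ (Λ : Type u) (iv dv : Λ → ℕ) (e : Λ → W), IsDecompEnd gr f iv dv e ∧
      ∀ α, 2 * iv α + dv α = s + 1 := by
  classical
  let P : ℕ → Submodule k W := fun d => gr d ⊓ LinearMap.ker (f ^ (s - 2 * d + 1))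
  let bP : ∀ d, Module.Basis (Module.Basis.ofVectorSpaceIndex k (P d)) k (P d) :=
    fun d => Module.Basis.ofVectorSpace k (P d)
  let Λ := Σ d : {d : ℕ // 2 * d ≤ s}, Module.Basis.ofVectorSpaceIndex k (P d)
  let iv : Λ → ℕ := fun α => α.1
  let dv : Λ → ℕ := fun α => s + 1 - 2 * α.1
  let e : Λ → W := fun α => (bP α.1 α.2 : P α.1)
  have hiv : ∀ α, 2 * iv α + dv α = s + 1 := by
    intro α; have := α.1.2; simp only [iv, dv]; omega
  have hegr : ∀ α, e α ∈ gr (iv α) := fun α => (bP α.1 α.2).2.1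
  have heker : ∀ α, (f ^ dv α) (e α) = 0 := by
    intro α
    have h1 : (f ^ (s - 2 * (α.1 : ℕ) + 1)) (e α) = 0 := (bP α.1 α.2).2.2
    have := α.1.2
    have h2 : dv α = s - 2 * (α.1 : ℕ) + 1 := by simp only [dv]; omega
    rw [h2]; exact h1
  obtain ⟨π, hπ1, hπ2⟩ := exists_proj_s19 gr hint
  refine ⟨Λ, iv, dv, e, ⟨?_, ?_, heker, ?_, ?_⟩, hiv⟩
  · intro α; have := α.1.2; simp only [dv]; omega
  · intro α j _; exact endpow_mem gr f hf j _ _ (hegr α)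
  · rw [linearIndependent_iff']
    intro S g hS
    have main : ∀ n, ∀ q ∈ S, iv q.1 = n → g q = 0 := by
      intro n
      induction n using Nat.strong_induction_on with
      | _ n ih =>
      intro q0 hq0 hn
      have hj0 := q0.2.2
      have hiv0 := hiv q0.1
      set d0 := iv q0.1 with hd0
      set j0 : ℕ := (q0.2 : ℕ) with hj0'
      let t : (Σ α : Λ, Fin (dv α)) → W := fun q =>
        if iv q.1 = d0 ∧ (q.2 : ℕ) = j0 then g q • e q.1 else 0
      have hterm : ∀ q ∈ S, (f ^ (s - 2 * d0 - j0)) (π (d0 + j0) (g q • (f ^ (q.2 : ℕ)) (e q.1)))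
          = (f ^ (s - 2 * d0)) (t q) := by
        intro q hq
        have hjq := q.2.2
        have hivq := hiv q.1
        have hmem := endpow_mem gr f hf q.2 _ _ (hegr q.1)
        by_cases hD : iv q.1 + q.2 = d0 + j0
        · rw [map_smul, hπ1 _ _ (hD ▸ hmem), map_smul, ← Module.End.mul_apply, ← pow_add]
          rcases lt_trichotomy (iv q.1) d0 with hlt | heq | hgt
          · rw [ih (iv q.1) (hn ▸ hlt) q hq rfl]
            have : t q = 0 := if_neg (fun h => hlt.ne h.1)
            rw [this, zero_smul, map_zero]
          · have hj : (q.2 : ℕ) = j0 := by omega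
            have : t q = g q • e q.1 := if_pos ⟨heq, hj⟩
            rw [this, map_smul, hj]
            congr 3; omega
          · have : t q = 0 := if_neg (fun h => hgt.ne' h.1)
            rw [this, map_zero, pow_zero_of_le f _ (dv q.1) _ (heker q.1) (by omega), smul_zero]
        · rw [map_smul, hπ2 _ _ (Ne.symm hD) _ hmem, smul_zero, map_zero]
          have : t q = 0 := if_neg (fun h => hD (by rw [h.1, h.2]))
          rw [this, map_zero]
      have hsum : (f ^ (s - 2 * d0)) (∑ q ∈ S, t q) = 0 := by
        rw [map_sum, ← Finset.sum_congr rfl hterm, ← map_sum, ← map_sum, hS, map_zero, map_zero]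
      have hx : ∑ q ∈ S, t q = 0 := by
        refine hinj d0 q0.1.1.2 _ (Submodule.sum_mem _ ?_) hsum
        intro q _
        by_cases hc : iv q.1 = d0 ∧ (q.2 : ℕ) = j0
        · have : t q = g q • e q.1 := if_pos hc
          rw [this, ← hc.1]
          exact Submodule.smul_mem _ _ (hegr q.1)
        · have : t q = 0 := if_neg hc
          rw [this]; exact Submodule.zero_mem _
      obtain ⟨φ, hφ⟩ := LinearMap.exists_extend ((bP d0).coord q0.1.2)
      have hφ' : ∀ x : P d0, φ x = (bP d0).coord q0.1.2 x := fun x => LinearMap.congr_fun hφ x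
      have h0 : φ (∑ q ∈ S, t q) = 0 := by rw [hx, map_zero]
      rw [map_sum, Finset.sum_eq_single q0] at h0
      · have : t q0 = g q0 • e q0.1 := if_pos ⟨rfl, rfl⟩
        rw [this, map_smul] at h0
        have h1 : φ (e q0.1) = 1 := by
          rw [show e q0.1 = ((bP d0 q0.1.2 : P d0) : W) from rfl, hφ']
          simp
        simpa [h1] using h0
      · intro q _ hne
        by_cases hc : iv q.1 = d0 ∧ (q.2 : ℕ) = j0
        · have ht : t q = g q • e q.1 := if_pos hc
          rw [ht, map_smul]
          clear_value t
          obtain ⟨⟨⟨d1, hd1⟩, i1⟩, ⟨j1, hj1⟩⟩ := q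
          obtain ⟨⟨⟨d2, hd2⟩, i2⟩, ⟨j2, hj2⟩⟩ := q0
          obtain ⟨hc1, hc2⟩ := hc
          change d1 = d2 at hc1
          change j1 = j2 at hc2
          subst hc1 hc2
          have h1 : φ (e ⟨⟨d1, hd1⟩, i1⟩) = 0 := by
            refine (hφ' (bP d1 i1)).trans ?_
            have : i1 ≠ i2 := by rintro rfl; exact hne rfl
            change (bP d1).coord i2 (bP d1 i1) = 0
            simp [this]
          rw [h1, smul_zero]
        · have : t q = 0 := if_neg hc
          rw [this, map_zero]
      · intro h; exact absurd hq0 h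
    intro q hq; exact main _ q hq rfl
  · set B := Submodule.span k (Set.range (fun q : Σ α : Λ, Fin (dv α) => (f ^ (q.2 : ℕ)) (e q.1)))
      with hB
    have hmemB : ∀ α j, (f ^ j) (e α) ∈ B := by
      intro α j
      rcases lt_or_ge j (dv α) with hj | hj
      · exact Submodule.subset_span ⟨⟨α, ⟨j, hj⟩⟩, rfl⟩
      · rw [pow_zero_of_le f _ _ _ (heker α) hj]; exact Submodule.zero_mem _
    have hfB : ∀ n, ∀ x ∈ B, (f ^ n) x ∈ B := by
      intro n
      change B ≤ B.comap (f ^ n)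
      conv_lhs => rw [hB]
      rw [Submodule.span_le]
      rintro _ ⟨q, rfl⟩
      change (f ^ n) ((f ^ (q.2 : ℕ)) (e q.1)) ∈ B
      rw [← Module.End.mul_apply, ← pow_add]
      exact hmemB _ _
    have hPB : ∀ d, 2 * d ≤ s → P d ≤ B := by
      intro d hd x hx
      have h1 : (⟨x, hx⟩ : P d) ∈ Submodule.span k (Set.range (bP d)) := by
        rw [(bP d).span_eq]; trivial
      have h2 : Submodule.span k (Set.range (bP d)) ≤ B.comap (P d).subtype := by
        rw [Submodule.span_le]
        rintro _ ⟨i, rfl⟩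
        exact hmemB ⟨⟨d, hd⟩, i⟩ 0
      exact h2 h1
    have hlow : ∀ d, 2 * d ≤ s → gr d ≤ B := by
      intro d
      induction d with
      | zero =>
        intro hd x hx
        refine hPB 0 hd ⟨hx, ?_⟩
        have := endpow_mem gr f hf (s - 2 * 0 + 1) 0 x hx
        rw [hbig _ (by omega)] at this
        simpa using this
      | succ d ih =>
        intro hd x hx
        have h1 := endpow_mem gr f hf (s - 2 * (d + 1) + 1) _ x hx
        rw [show d + 1 + (s - 2 * (d + 1) + 1) = s - d by omega] at h1
        obtain ⟨u, hu, hu2⟩ := hsurj d (by omega) _ h1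
        have h2 : x - f u ∈ P (d + 1) := by
          refine ⟨Submodule.sub_mem _ hx (hf _ _ hu), ?_⟩
          change (f ^ (s - 2 * (d + 1) + 1)) (x - f u) = 0
          rw [map_sub, ← hu2, ← Module.End.mul_apply, ← pow_succ, sub_eq_zero]
          congr 2; omega
        have h3 := Submodule.add_mem _ (hPB _ hd h2) (hfB 1 _ (ih (by omega) hu))
        simpa using h3
    have hall : ∀ d, gr d ≤ B := by
      intro d
      by_cases hd : 2 * d ≤ s
      · exact hlow d hd
      · by_cases hd2 : d ≤ s
        · intro x hx
          obtain ⟨u, hu, rfl⟩ := hsurj (s - d) (by omega) x (by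
            rw [show s - (s - d) = d by omega]; exact hx)
          exact hfB _ _ (hlow (s - d) (by omega) hu)
        · rw [hbig d (by omega)]; exact bot_le
    rw [eq_top_iff, ← hint.submodule_iSup_eq_top]
    exact iSup_le hall

lemma exists_lefschetz_lower (gr : ℕ → Submodule k W) (hint : DirectSum.IsInternal gr)
    (f : Module.End k W) (hf : ∀ d, ∀ x ∈ gr d, f x ∈ gr (d + 1)) (s : ℕ)
    (hbig : ∀ d, s < d → gr d = ⊥)
    (hinj : ∀ d, 2 * d ≤ s → ∀ x ∈ gr d, (f ^ (s - 2 * d)) x = 0 → x = 0)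
    (hsurj : ∀ d, 2 * d ≤ s → ∀ w ∈ gr (s - d), ∃ x ∈ gr d, (f ^ (s - 2 * d)) x = w) :
    ∃ Y : Module.End k W, (∀ d, ∀ x ∈ gr (d + 1), Y x ∈ gr d) ∧ (∀ x ∈ gr 0, Y x = 0) ∧
      ∀ d, ∀ x ∈ gr d, f (Y x) - Y (f x) = ((2 * d - s : ℤ) : k) • x := by
  obtain ⟨Λ, iv, dv, e, hdec, hiv⟩ := exists_lefschetz_decomp gr hint f hf s hbig hinj hsurj
  obtain ⟨Y, hY⟩ := exists_lower gr f iv dv e hdec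
  have hsp := gr_le_span gr hint (fun q : Σ α : Λ, Fin (dv α) => (f ^ (q.2 : ℕ)) (e q.1))
    (fun q => iv q.1 + q.2) (fun q => hdec.2.1 q.1 q.2 q.2.2) hdec.2.2.2.2
  refine ⟨Y, ?_, ?_, ?_⟩
  · intro d
    suffices gr (d + 1) ≤ (gr d).comap Y from this
    refine (hsp _).trans (Submodule.span_le.2 ?_)
    rintro _ ⟨⟨α, j, hj⟩, hq, rfl⟩
    change Y ((f ^ j) (e α)) ∈ gr d
    change iv α + j = d + 1 at hq
    rw [hY α j hj.le]
    rcases Nat.eq_zero_or_pos j with rfl | hj0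
    · simp
    · have := hdec.2.1 α (j - 1) (by omega)
      rw [show iv α + (j - 1) = d by omega] at this
      exact Submodule.smul_mem _ _ this
  · suffices gr 0 ≤ LinearMap.ker Y from this
    refine (hsp _).trans (Submodule.span_le.2 ?_)
    rintro _ ⟨⟨α, j, hj⟩, hq, rfl⟩
    change Y ((f ^ j) (e α)) = 0
    change iv α + j = 0 at hq
    rw [hY α j hj.le, show j = 0 by omega]
    simp
  · intro d
    suffices gr d ≤ LinearMap.ker (f * Y - Y * f - ((2 * d - s : ℤ) : k) • 1) by
      intro x hx
      have := this hx
      rw [LinearMap.mem_ker] at this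
      exact sub_eq_zero.1 this
    refine (hsp _).trans (Submodule.span_le.2 ?_)
    rintro _ ⟨⟨α, j, hj⟩, hq, rfl⟩
    change f (Y ((f ^ j) (e α))) - Y (f ((f ^ j) (e α))) - ((2 * d - s : ℤ) : k) • ((f ^ j) (e α)) = 0
    change iv α + j = d at hq
    have h1 : f ((f ^ j) (e α)) = (f ^ (j + 1)) (e α) := by rw [pow_succ']; rfl
    have h2 : f (((j * (dv α - j) : ℤ) : k) • (f ^ (j - 1)) (e α)) =
        ((j * (dv α - j) : ℤ) : k) • (f ^ j) (e α) := by
      rcases Nat.eq_zero_or_pos j with rfl | hj0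
      · simp
      · rw [map_smul, ← Module.End.mul_apply, ← pow_succ', Nat.sub_add_cancel hj0]
    rw [h1, hY α j hj.le, hY α (j + 1) hj, h2, Nat.add_sub_cancel, ← sub_smul, ← sub_smul]
    convert zero_smul k _
    rw [← Int.cast_sub, ← Int.cast_sub]
    have : (2 * iv α + dv α : ℤ) = s + 1 := by exact_mod_cast hiv α
    rw [← hq, show (s : ℤ) = 2 * iv α + dv α - 1 by linarith]
    convert Int.cast_zero
    push_cast; ring

end Lef
section Tens
variable {k M N : Type*} [Field k] [AddCommGroup M] [Module k M] [AddCommGroup N] [Module k N]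

/-- graded pieces of `M ⊗ (string generated by e)` -/
def strGr (grM : ℕ → Submodule k M) (g : Module.End k N) (e : N) (L : ℕ) (d : ℤ) :
    Submodule k (M ⊗[k] N) :=
  Submodule.span k {x | ∃ (i j : ℕ) (m : M), j < L ∧ (i + j : ℤ) = d ∧ m ∈ grM i ∧
    x = m ⊗ₜ[k] (g ^ j) e}

lemma string_SL [FiniteDimensional k M] [FiniteDimensional k N]
    (grM : ℕ → Submodule k M) (f YM : Module.End k M) (g YN : Module.End k N) (s L : ℕ) (e : N)
    (p : ℕ) [CharP k p] (hL : 1 ≤ L) (hp : s + L ≤ p)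
    (hf : ∀ d, ∀ x ∈ grM d, f x ∈ grM (d + 1))
    (hbig : ∀ d, s < d → grM d = ⊥)
    (hY1 : ∀ d, ∀ x ∈ grM (d + 1), YM x ∈ grM d) (hY0 : ∀ x ∈ grM 0, YM x = 0)
    (hYH : ∀ d, ∀ x ∈ grM d, f (YM x) - YM (f x) = ((2 * d - s : ℤ) : k) • x)
    (he : (g ^ L) e = 0)
    (hYN : ∀ j, j ≤ L → YN ((g ^ j) e) = ((j * (L - j) : ℤ) : k) • (g ^ (j - 1)) e)
    (X : Module.End k (M ⊗[k] N)) (hX : ∀ m n, X (m ⊗ₜ n) = f m ⊗ₜ n + m ⊗ₜ g n) :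
    (∀ d, ∀ v ∈ strGr grM g e L d, X v ∈ strGr grM g e L (d + 1)) ∧
    (∀ (d : ℤ) (a : ℕ), 2 * d + a + 1 ≤ s + L → ∀ v ∈ strGr grM g e L d, (X ^ a) v = 0 → v = 0) ∧
    (∀ (d : ℤ) (a : ℕ), (s + L : ℤ) ≤ 2 * d + a + 1 → ∀ w ∈ strGr grM g e L (d + a),
      ∃ x ∈ strGr grM g e L d, (X ^ a) x = w) := by
  let Y : Module.End k (M ⊗[k] N) := TensorProduct.map YM LinearMap.id +
    TensorProduct.map LinearMap.id YN
  have hY : ∀ m n, Y (m ⊗ₜ n) = YM m ⊗ₜ n + m ⊗ₜ YN n := by intro m n; simp [Y]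
  have hgj : ∀ j, g ((g ^ j) e) = (g ^ (j + 1)) e := by intro j; rw [pow_succ']; rfl
  have hXm : ∀ d, ∀ v ∈ strGr grM g e L d, X v ∈ strGr grM g e L (d + 1) := by
    intro d
    suffices strGr grM g e L d ≤ (strGr grM g e L (d + 1)).comap X from this
    refine Submodule.span_le.2 ?_
    rintro _ ⟨i, j, m, hj, hij, hm, rfl⟩
    change X (m ⊗ₜ[k] (g ^ j) e) ∈ strGr grM g e L (d + 1)
    rw [hX, hgj]
    refine Submodule.add_mem _ ?_ ?_
    · exact Submodule.subset_span ⟨i + 1, j, f m, hj, by push_cast; omega, hf _ _ hm, rfl⟩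
    · rcases Nat.lt_or_ge (j + 1) L with h | h
      · exact Submodule.subset_span ⟨i, j + 1, m, h, by push_cast; omega, hm, rfl⟩
      · rw [show j + 1 = L by omega, he, TensorProduct.tmul_zero]; exact Submodule.zero_mem _
  have hYm : ∀ d, ∀ v ∈ strGr grM g e L d, Y v ∈ strGr grM g e L (d - 1) := by
    intro d
    suffices strGr grM g e L d ≤ (strGr grM g e L (d - 1)).comap Y from this
    refine Submodule.span_le.2 ?_
    rintro _ ⟨i, j, m, hj, hij, hm, rfl⟩
    change Y (m ⊗ₜ[k] (g ^ j) e) ∈ strGr grM g e L (d - 1)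
    rw [hY, hYN j hj.le]
    refine Submodule.add_mem _ ?_ ?_
    · rcases i with _ | i
      · rw [hY0 m hm, TensorProduct.zero_tmul]; exact Submodule.zero_mem _
      · exact Submodule.subset_span ⟨i, j, YM m, hj, by push_cast at hij; omega, hY1 _ _ hm, rfl⟩
    · rcases j with _ | j
      · simp
      · rw [TensorProduct.tmul_smul]
        exact Submodule.smul_mem _ _
          (Submodule.subset_span ⟨i, j, m, by omega, by push_cast at hij; omega, hm, rfl⟩)
  have hH : ∀ d, ∀ v ∈ strGr grM g e L d,
      X (Y v) - Y (X v) = (((2 * d - (s + L - 1 : ℕ) : ℤ)) : k) • v := by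
    intro d
    suffices strGr grM g e L d ≤
        LinearMap.ker (X * Y - Y * X - (((2 * d - (s + L - 1 : ℕ) : ℤ)) : k) • 1) by
      intro x hx
      have := this hx
      rw [LinearMap.mem_ker] at this
      exact sub_eq_zero.1 this
    refine Submodule.span_le.2 ?_
    rintro _ ⟨i, j, m, hj, hij, hm, rfl⟩
    change X (Y (m ⊗ₜ[k] (g ^ j) e)) - Y (X (m ⊗ₜ[k] (g ^ j) e)) -
      (((2 * d - (s + L - 1 : ℕ) : ℤ)) : k) • (m ⊗ₜ[k] (g ^ j) e) = 0
    have h1 := hYH i m hm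
    have h2 : g (YN ((g ^ j) e)) - YN (g ((g ^ j) e)) = ((2 * j + 1 - L : ℤ) : k) • (g ^ j) e := by
      have h2 : g (((j * (L - j) : ℤ) : k) • (g ^ (j - 1)) e) =
          ((j * (L - j) : ℤ) : k) • (g ^ j) e := by
        rcases Nat.eq_zero_or_pos j with rfl | hj0
        · simp
        · rw [map_smul, hgj, Nat.sub_add_cancel hj0]
      rw [hgj, hYN j hj.le, hYN (j + 1) hj, h2, Nat.add_sub_cancel, ← sub_smul]
      congr 1; push_cast; ring
    rw [hY, hX, map_add, map_add, hX, hX, hY, hY]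
    have h3 : ((2 * d - (s + L - 1 : ℕ) : ℤ) : k) =
        ((2 * i - s : ℤ) : k) + ((2 * j + 1 - L : ℤ) : k) := by
      rw [← Int.cast_add]; congr 1
      omega
    rw [h3, add_smul, TensorProduct.smul_tmul', ← h1, ← TensorProduct.tmul_smul, ← h2,
      TensorProduct.sub_tmul, TensorProduct.tmul_sub]
    abel
  have hneg : ∀ d < 0, strGr grM g e L d = ⊥ := by
    intro d hd
    rw [eq_bot_iff]
    refine Submodule.span_le.2 ?_
    rintro _ ⟨i, j, m, hj, hij, hm, rfl⟩
    omega
  have hbig' : ∀ d > ((s + L - 1 : ℕ) : ℤ), strGr grM g e L d = ⊥ := by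
    intro d hd
    rw [eq_bot_iff]
    refine Submodule.span_le.2 ?_
    rintro _ ⟨i, j, m, hj, hij, hm, rfl⟩
    rw [hbig i (by omega)] at hm
    rw [(Submodule.mem_bot k).1 hm, TensorProduct.zero_tmul]
    exact Submodule.zero_mem _
  refine ⟨hXm, ?_, ?_⟩
  · intro d a hda v hv
    exact sl2_inj X Y _ (s + L - 1) p (by omega) hXm hYm hH hneg (d.toNat + 1) d (by omega) a
      (by omega) v hv
  · intro d a hda v hv
    exact sl2_surj X Y _ (s + L - 1) p (by omega) hXm hYm hH hneg hbig' d a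
      (by omega) v hv

/-- the strong Lefschetz condition forces all strings to be comparable -/
lemma comparable (grN : ℕ → Submodule k N) (g : Module.End k N) {Λ : Type*} (iv dv : Λ → ℕ)
    (e : Λ → N) (h : IsDecompEnd grN g iv dv e) (hSL : IsSLEnd grN g) (α β : Λ)
    (hi : iv α < iv β) (hj : dv α + iv α < dv β + iv β) : False := by
  classical
  obtain ⟨h1, hgr, h0, hli, hsp⟩ := h
  have ha := h1 α
  have hb := h1 β
  let b := Module.Basis.mk hli hsp.ge
  have hb' : ∀ q, b q = (g ^ (q.2 : ℕ)) (e q.1) := fun q => by simp [b]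
  rcases hSL (iv β + dv β - 1 - iv α) (iv α) with hin | hsu
  · have := hin (e α) (by simpa using hgr α 0 ha)
      (pow_zero_of_le g _ (dv α) _ (h0 α) (by omega))
    exact b.ne_zero ⟨α, ⟨0, ha⟩⟩ (by rw [hb']; simpa using this)
  · obtain ⟨x, -, hx⟩ := hsu ((g ^ (dv β - 1)) (e β)) (by
      have := hgr β (dv β - 1) (by omega)
      convert this using 2; omega)
    let q0 : Σ α : Λ, Fin (dv α) := ⟨β, ⟨dv β - 1, by omega⟩⟩
    have hz : b.coord q0 ∘ₗ (g ^ (iv β + dv β - 1 - iv α)) = 0 := by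
      refine b.ext ?_
      rintro ⟨γ, j, hj'⟩
      rw [LinearMap.comp_apply, hb', ← Module.End.mul_apply, ← pow_add]
      simp only [LinearMap.zero_apply]
      rcases Nat.lt_or_ge (iv β + dv β - 1 - iv α + j) (dv γ) with hlt | hge
      · have := hb' ⟨γ, ⟨iv β + dv β - 1 - iv α + j, hlt⟩⟩
        simp only at this
        rw [← this, Module.Basis.coord_apply, Module.Basis.repr_self, Finsupp.single_apply, if_neg]
        intro heq
        obtain ⟨rfl, heq2⟩ := Sigma.mk.inj_iff.1 heq
        have := congrArg Fin.val (eq_of_heq heq2)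
        simp only at this
        omega
      · rw [pow_zero_of_le g _ _ _ (h0 γ) hge, map_zero]
    have h2 := LinearMap.congr_fun hz x
    rw [LinearMap.comp_apply, hx] at h2
    have h3 := hb' q0
    simp only [q0] at h3
    rw [← h3, Module.Basis.coord_apply, Module.Basis.repr_self] at h2
    simp [q0] at h2

theorem tensor_SL [FiniteDimensional k M] [FiniteDimensional k N]
    (grM : ℕ → Submodule k M) (hintM : DirectSum.IsInternal grM)
    (grN : ℕ → Submodule k N) (hintN : DirectSum.IsInternal grN)
    (f : Module.End k M) (g : Module.End k N) (s t p : ℕ) [CharP k p] (hst : s + t < p)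
    (hf : ∀ d, ∀ x ∈ grM d, f x ∈ grM (d + 1))
    (hbigM : ∀ d, s < d → grM d = ⊥) (hbigN : ∀ d, t < d → grN d = ⊥)
    (hSLM : IsSLEnd grM f) (hSLN : IsSLEnd grN g)
    (hsym : ∀ d : ℕ, d ≤ s → Module.finrank k (grM d) = Module.finrank k (grM (s - d)))
    {Λ : Type*} [Fintype Λ] (iv dv : Λ → ℕ) (e : Λ → N)
    (hdec : IsDecompEnd grN g iv dv e) (hac : AlmostCentered iv dv)
    (X : Module.End k (M ⊗[k] N)) (hX : ∀ m n, X (m ⊗ₜ n) = f m ⊗ₜ n + m ⊗ₜ g n) :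
    IsSLEnd (tensorGr grM grN) X := by
  classical
  -- bijectivity on `M`
  have hbij : ∀ d, 2 * d ≤ s → (∀ x ∈ grM d, (f ^ (s - 2 * d)) x = 0 → x = 0) ∧
      (∀ w ∈ grM (s - d), ∃ x ∈ grM d, (f ^ (s - 2 * d)) x = w) := by
    intro d hd
    have hm : ∀ x ∈ grM d, (f ^ (s - 2 * d)) x ∈ grM (s - d) := by
      intro x hx
      have := endpow_mem grM f hf (s - 2 * d) d x hx
      rwa [show d + (s - 2 * d) = s - d by omega] at this
    let T : grM d →ₗ[k] grM (s - d) := (f ^ (s - 2 * d)).restrict hm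
    have hiff := LinearMap.injective_iff_surjective_of_finrank_eq_finrank (f := T)
      (hsym d (by omega))
    have h1 : Function.Injective T ↔ ∀ x ∈ grM d, (f ^ (s - 2 * d)) x = 0 → x = 0 := by
      rw [← LinearMap.ker_eq_bot, LinearMap.ker_eq_bot']
      constructor
      · intro h x hx h0
        exact congrArg Subtype.val (h ⟨x, hx⟩ (Subtype.ext h0))
      · intro h x h0
        exact Subtype.ext (h x x.2 (congrArg Subtype.val h0))
    have h2 : Function.Surjective T ↔
        ∀ w ∈ grM (s - d), ∃ x ∈ grM d, (f ^ (s - 2 * d)) x = w := by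
      constructor
      · intro h w hw
        obtain ⟨x, hx⟩ := h ⟨w, hw⟩
        exact ⟨x, x.2, congrArg Subtype.val hx⟩
      · intro h w
        obtain ⟨x, hx, hxw⟩ := h w w.2
        exact ⟨⟨x, hx⟩, Subtype.ext hxw⟩
    rw [h1, h2] at hiff
    rcases hSLM (s - 2 * d) d with h | h
    · exact ⟨h, hiff.1 h⟩
    · rw [show d + (s - 2 * d) = s - d by omega] at h
      exact ⟨hiff.2 h, h⟩
  obtain ⟨YM, hY1, hY0, hYH⟩ := exists_lefschetz_lower grM hintM f hf s hbigM
    (fun d hd => (hbij d hd).1) (fun d hd => (hbij d hd).2)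
  obtain ⟨YN, hYN⟩ := exists_lower grN g iv dv e hdec
  obtain ⟨π, hπ⟩ := exists_stringProj grN g iv dv e hdec
  have hne : ∀ α j, j < dv α → (g ^ j) (e α) ≠ 0 := fun α j hj =>
    hdec.2.2.2.1.ne_zero (⟨α, ⟨j, hj⟩⟩ : Σ α : Λ, Fin (dv α))
  have hdt : ∀ α, iv α + dv α ≤ t + 1 := by
    intro α
    by_contra hcon
    have h1 := hdec.1 α
    have := hdec.2.1 α (dv α - 1) (by omega)
    rw [hbigN _ (by omega)] at this
    exact hne α _ (by omega) ((Submodule.mem_bot k).1 this)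
  have hstr := fun α => string_SL grM f YM g YN s (dv α) (e α) p (hdec.1 α)
    (by have := hdt α; omega) hf hbigM hY1 hY0 hYH (hdec.2.2.1 α) (fun j hj => hYN α j hj) X hX
  have hspN := gr_le_span grN hintN (fun q : Σ α : Λ, Fin (dv α) => (g ^ (q.2 : ℕ)) (e q.1))
    (fun q => iv q.1 + q.2) (fun q => hdec.2.1 q.1 q.2 q.2.2) hdec.2.2.2.2
  -- the projections on the tensor product
  let Pr : Λ → Module.End k (M ⊗[k] N) := fun α => TensorProduct.map LinearMap.id (π α)
  have hPr : ∀ α m n, Pr α (m ⊗ₜ n) = m ⊗ₜ π α n := by intro α m n; simp [Pr]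
  have htop : ∀ P : Submodule k N, (∀ α j, (g ^ j) (e α) ∈ P) → ∀ n, n ∈ P := by
    intro P hP n
    have : (⊤ : Submodule k N) ≤ P := by
      rw [← hdec.2.2.2.2]
      refine Submodule.span_le.2 ?_
      rintro _ ⟨q, rfl⟩
      exact hP _ _
    exact this trivial
  have hπg : ∀ α n, π α (g n) = g (π α n) := by
    intro α n
    refine sub_eq_zero.1 (htop (LinearMap.ker (π α * g - g * π α)) ?_ n)
    intro β j
    change π α (g ((g ^ j) (e β))) - g (π α ((g ^ j) (e β))) = 0
    have : g ((g ^ j) (e β)) = (g ^ (j + 1)) (e β) := by rw [pow_succ']; rfl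
    rw [this, hπ, hπ]
    split_ifs
    · rw [this, sub_self]
    · simp
  have hπsum : ∀ n, ∑ α, π α n = n := by
    intro n
    have := htop (LinearMap.ker (∑ α, π α - 1)) ?_ n
    · rw [LinearMap.mem_ker, LinearMap.sub_apply, LinearMap.sum_apply] at this
      exact sub_eq_zero.1 this
    · intro β j
      rw [LinearMap.mem_ker, LinearMap.sub_apply, LinearMap.sum_apply]
      simp [hπ]
  have hPrX : ∀ α v, Pr α (X v) = X (Pr α v) := by
    intro α v
    induction v using TensorProduct.induction_on with
    | zero => simp
    | tmul m n => rw [hX, map_add, hPr, hPr, hPr, hX, hπg]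
    | add x y hx hy => simp only [map_add, hx, hy]
  have hPrXa : ∀ α a v, Pr α ((X ^ a) v) = (X ^ a) (Pr α v) := by
    intro α a v
    induction a with
    | zero => simp
    | succ a ih => rw [pow_succ', Module.End.mul_apply, Module.End.mul_apply, hPrX, ih]
  have hPrsum : ∀ v, ∑ α, Pr α v = v := by
    intro v
    induction v using TensorProduct.induction_on with
    | zero => simp
    | tmul m n => simp only [hPr]; rw [← TensorProduct.tmul_sum, hπsum]
    | add x y hx hy => simp only [map_add, Finset.sum_add_distrib, hx, hy]
  have hPrmem : ∀ α (d : ℕ), ∀ v ∈ tensorGr grM grN d,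
      Pr α v ∈ strGr grM g (e α) (dv α) ((d : ℤ) - iv α) := by
    intro α d
    suffices tensorGr grM grN d ≤
      (strGr grM g (e α) (dv α) ((d : ℤ) - iv α)).comap (Pr α) from this
    refine Submodule.span_le.2 ?_
    rintro _ ⟨d₁, d₂, x, y, hd, hx, hy, rfl⟩
    have h1 : grN d₂ ≤ ((strGr grM g (e α) (dv α) ((d : ℤ) - iv α)).comap (Pr α)).comap
        (TensorProduct.mk k M N x) := by
      refine (hspN d₂).trans (Submodule.span_le.2 ?_)
      rintro _ ⟨⟨β, j, hj⟩, hq, rfl⟩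
      change iv β + j = d₂ at hq
      change Pr α (x ⊗ₜ ((g ^ j) (e β))) ∈ strGr grM g (e α) (dv α) ((d : ℤ) - iv α)
      rw [hPr, hπ]
      split_ifs with hβ
      · subst hβ
        exact Submodule.subset_span ⟨d₁, j, x, hj, by omega, hx, rfl⟩
      · simp
    exact h1 hy
  have hback : ∀ α (d : ℕ), strGr grM g (e α) (dv α) ((d : ℤ) - iv α) ≤ tensorGr grM grN d := by
    intro α d
    refine Submodule.span_le.2 ?_
    rintro _ ⟨i, j, m, hj, hij, hm, rfl⟩
    exact Submodule.subset_span ⟨i, iv α + j, m, _, by omega, hm, hdec.2.1 α j hj, rfl⟩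
  -- centres differ by at most one
  have hcen : ∀ α β, 2 * iv α + dv α ≤ 2 * iv β + dv β + 1 := by
    intro α β
    by_cases h1 : iv α ≤ iv β ∧ dv β + iv β ≤ dv α + iv α
    · have := abs_le.1 (hac α β h1)
      omega
    · by_cases h2 : iv β ≤ iv α ∧ dv α + iv α ≤ dv β + iv β
      · have := abs_le.1 (hac β α h2)
        omega
      · exfalso
        rcases lt_trichotomy (iv α) (iv β) with h | h | h
        · exact comparable grN g iv dv e hdec hSLN α β h (by omega)
        · omega
        · exact comparable grN g iv dv e hdec hSLN β α h (by omega)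
  intro a d
  by_cases hcase : ∀ α, 2 * d + a + 1 ≤ s + (2 * iv α + dv α)
  · left
    intro v hv h0
    rw [← hPrsum v]
    refine Finset.sum_eq_zero fun α _ => ?_
    have := hcase α
    refine (hstr α).2.1 ((d : ℤ) - iv α) a (by omega) _ (hPrmem α d v hv) ?_
    rw [← hPrXa, h0, map_zero]
  · right
    push Not at hcase
    obtain ⟨α0, hα0⟩ := hcase
    intro w hw
    have : ∀ α, ∃ x ∈ strGr grM g (e α) (dv α) ((d : ℤ) - iv α), (X ^ a) x = Pr α w := by
      intro α
      have h1 := hcen α α0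
      refine (hstr α).2.2 ((d : ℤ) - iv α) a (by omega) _ ?_
      have := hPrmem α _ w hw
      convert this using 2
      push_cast; ring
    choose x hx hxw using this
    refine ⟨∑ α, x α, Submodule.sum_mem _ fun α _ => hback α d (hx α), ?_⟩
    rw [map_sum, Finset.sum_congr rfl fun α _ => hxw α, hPrsum]

end Tens

/-- Let `M` and `N` be Artinian graded modules over `R = k[x_1, …, x_n]`
with the strong Lefschetz property, over a field `k` of characteristic `p > s + t`, where
`s` and `t` are the socle degrees of `M` and `N`.  Let `l, y ∈ R_1` be strong Lefschetz
elements for `M` and `N` respectively.  If the Hilbert function of `M` is symmetric and the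
decomposition of `N` as a graded `k[y]`-module is almost centered, then `M ⊗_k N` has the
strong Lefschetz property. -/
theorem statement19 {k : Type} [Field k] (p : ℕ) (hp : p ≠ 0) [CharP k p]
    {n : ℕ} {M N : Type}
    [AddCommGroup M] [Module k M] [Module (MvPolynomial (Fin n) k) M]
    [IsScalarTower k (MvPolynomial (Fin n) k) M]
    [Module.Finite (MvPolynomial (Fin n) k) M] [FiniteDimensional k M]
    [AddCommGroup N] [Module k N] [Module (MvPolynomial (Fin n) k) N]
    [IsScalarTower k (MvPolynomial (Fin n) k) N]
    [Module.Finite (MvPolynomial (Fin n) k) N] [FiniteDimensional k N]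
    (grM : ℕ → Submodule k M) (hgrM : IsGrading k n grM)
    (grN : ℕ → Submodule k N) (hgrN : IsGrading k n grN)
    (s : ℕ) (hs : IsSocleDegree grM s)
    (t : ℕ) (ht : IsSocleDegree grN t)
    (hst : s + t < p)
    (l : MvPolynomial (Fin n) k) (hl : l ∈ homogeneousSubmodule (Fin n) k 1)
    (hSLM : IsSLAction grM l)
    (y : MvPolynomial (Fin n) k) (hy : y ∈ homogeneousSubmodule (Fin n) k 1)
    (hSLN : IsSLAction grN y)
    (hsym : ∀ d : ℕ, d ≤ s →
      Module.finrank k (grM d) = Module.finrank k (grM (s - d)))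
    {ΛN : Type} [Fintype ΛN] (ivN dvN : ΛN → ℕ) (eN : ΛN → N)
    (hdecN : IsDecomp grN y ivN dvN eN) (hacN : AlmostCentered ivN dvN) :
    ∃ w : (MvPolynomial (Fin n) k) ⊗[k] (MvPolynomial (Fin n) k),
      IsLinearForm2 w ∧ IsSLEnd (tensorGr grM grN) (tensorAct k M N w) := by
  have hfp : ∀ (a : ℕ) (x : M),
      ((Algebra.lsmul k k M l : Module.End k M) ^ a) x = l ^ a • x := by
    intro a x; rw [← map_pow]; rfl
  have hgp : ∀ (a : ℕ) (x : N),
      ((Algebra.lsmul k k N y : Module.End k N) ^ a) x = y ^ a • x := by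
    intro a x; rw [← map_pow]; rfl
  refine ⟨l ⊗ₜ 1 + 1 ⊗ₜ y, ⟨l, y, hl, hy, rfl⟩, ?_⟩
  refine tensor_SL grM hgrM.1 grN hgrN.1 (Algebra.lsmul k k M l) (Algebra.lsmul k k N y) s t p hst
    ?_ hs.2 ht.2 ?_ ?_ hsym ivN dvN eN ?_ hacN _ ?_
  · intro d x hx
    have := hgrM.2 1 d l hl x hx
    rw [add_comm] at this
    exact this
  · intro a d
    simp only [hfp]
    exact hSLM a d
  · intro a d
    simp only [hgp]
    exact hSLN a d
  · unfold IsDecompEnd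
    simp only [hgp]
    exact hdecN
  · have h1 : ∀ (a b : MvPolynomial (Fin n) k) (m : M) (n' : N),
        tensorAct k M N (a ⊗ₜ[k] b) (m ⊗ₜ[k] n') = (a • m) ⊗ₜ[k] (b • n') :=
      fun a b m n' => rfl
    intro m n'
    rw [map_add, LinearMap.add_apply, h1, h1, one_smul, one_smul]
    rfl
end
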